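/- arXiv:1310.5240 — 2 statements merged into one kernel-verified Lean document; each statement's English description precedes it below -/
import Mathlib

section
/- For every odd n ≥ 5 there exists a fully resolvable CMDRR(3n, n); moreover the resolution consists of 3n full rounds, each containing (3n−1)/2 games and giving byes to exactly one man and one woman, together with one short round containing n games. -/
open scoped Classical

/-- A mixed doubles game: an unordered pair of teams, each team being a
(man, woman) pair, for `n` men and `n` women indexed by `Fin n`. -/
abbrev Game (n : ℕ) := Sym2 (Fin n × Fin n)

/-- A game is valid if its two teams have distinct men and distinct women. -/
def Game.valid {n : ℕ} (g : Game n) : Prop :=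
  ∃ a b : Fin n × Fin n, g = s(a, b) ∧ a.1 ≠ b.1 ∧ a.2 ≠ b.2

/-- Man `m` plays in game `g`. -/
def Game.manIn {n : ℕ} (m : Fin n) (g : Game n) : Prop :=
  ∃ a b : Fin n × Fin n, g = s(a, b) ∧ a.1 = m

/-- Woman `w` plays in game `g`. -/
def Game.womanIn {n : ℕ} (w : Fin n) (g : Game n) : Prop :=
  ∃ a b : Fin n × Fin n, g = s(a, b) ∧ a.2 = w

/-- Man `m` and woman `w` are partners (teammates) in game `g`. -/
def Game.partners {n : ℕ} (m w : Fin n) (g : Game n) : Prop :=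
  (m, w) ∈ g

/-- Man `m` and woman `w` are opponents in game `g` (on different teams). -/
def Game.opposesMW {n : ℕ} (m w : Fin n) (g : Game n) : Prop :=
  ∃ a b : Fin n × Fin n, g = s(a, b) ∧ a.1 = m ∧ b.2 = w

/-- Men `m` and `m'` are opponents in game `g`. -/
def Game.opposesMM {n : ℕ} (m m' : Fin n) (g : Game n) : Prop :=
  ∃ a b : Fin n × Fin n, g = s(a, b) ∧ a.1 = m ∧ b.1 = m'

/-- Women `w` and `w'` are opponents in game `g`. -/
def Game.opposesWW {n : ℕ} (w w' : Fin n) (g : Game n) : Prop :=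
  ∃ a b : Fin n × Fin n, g = s(a, b) ∧ a.2 = w ∧ b.2 = w'

/-- A complete mixed doubles round robin tournament CMDRR(n,k). -/
structure CMDRR (n k : ℕ) where
  /-- The spouse pairs (man, woman). -/
  spouses : Finset (Fin n × Fin n)
  spouses_card : spouses.card = k
  spouses_inj1 : ∀ p ∈ spouses, ∀ q ∈ spouses, p.1 = q.1 → p = q
  spouses_inj2 : ∀ p ∈ spouses, ∀ q ∈ spouses, p.2 = q.2 → p = q
  /-- The multiset of games. -/
  games : Multiset (Game n)
  valid : ∀ g ∈ games, g.valid
  /-- (i) no game contains both members of a spouse pair. -/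
  no_spouse_game : ∀ g ∈ games, ∀ p ∈ spouses, ¬ (Game.manIn p.1 g ∧ Game.womanIn p.2 g)
  /-- (ii) every non-spouse man-woman pair partners exactly once ... -/
  partners_once : ∀ m w : Fin n, (m, w) ∉ spouses →
    games.countP (Game.partners m w) = 1
  /-- ... and opposes exactly once. -/
  opposesMW_once : ∀ m w : Fin n, (m, w) ∉ spouses →
    games.countP (Game.opposesMW m w) = 1
  /-- (iii) a spoused man opposes every other man exactly once. -/
  spousedM_opposes : ∀ m ∈ spouses.image Prod.fst, ∀ m' : Fin n, m' ≠ m →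
    games.countP (Game.opposesMM m m') = 1
  /-- (iii) a spoused woman opposes every other woman exactly once. -/
  spousedW_opposes : ∀ w ∈ spouses.image Prod.snd, ∀ w' : Fin n, w' ≠ w →
    games.countP (Game.opposesWW w w') = 1
  /-- (iv) an unspoused man opposes exactly one other unspoused man exactly twice,
  and all other men exactly once. -/
  unspousedM_opposes : ∀ m : Fin n, m ∉ spouses.image Prod.fst →
    ∃ m' : Fin n, m' ≠ m ∧ m' ∉ spouses.image Prod.fst ∧
      games.countP (Game.opposesMM m m') = 2 ∧
      ∀ m'' : Fin n, m'' ≠ m → m'' ≠ m' → games.countP (Game.opposesMM m m'') = 1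
  /-- (iv) likewise for unspoused women. -/
  unspousedW_opposes : ∀ w : Fin n, w ∉ spouses.image Prod.snd →
    ∃ w' : Fin n, w' ≠ w ∧ w' ∉ spouses.image Prod.snd ∧
      games.countP (Game.opposesWW w w') = 2 ∧
      ∀ w'' : Fin n, w'' ≠ w → w'' ≠ w' → games.countP (Game.opposesWW w w'') = 1

/-- A round: a multiset of games in which each player appears at most once. -/
def IsRound {n : ℕ} (r : Multiset (Game n)) : Prop :=
  (∀ m : Fin n, r.countP (Game.manIn m) ≤ 1) ∧
  (∀ w : Fin n, r.countP (Game.womanIn w) ≤ 1)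

/-- A full round: all players play if `n` is even; all but exactly one man and
one woman play if `n` is odd. -/
def FullRound {n : ℕ} (r : Multiset (Game n)) : Prop :=
  IsRound r ∧
  ((Even n ∧ (∀ m : Fin n, r.countP (Game.manIn m) = 1) ∧
      (∀ w : Fin n, r.countP (Game.womanIn w) = 1)) ∨
   (¬ Even n ∧ (∃! m : Fin n, r.countP (Game.manIn m) = 0) ∧
      (∃! w : Fin n, r.countP (Game.womanIn w) = 0)))


/-- five maps -/
def FM {X : Type} (f s : X → X → X) : Fin 5 → X → X → X × X
  | 0 => fun x y => (x, f x y)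
  | 1 => fun x y => (x, f y x)
  | 2 => fun x y => (f x y, f y x)
  | 3 => fun x y => (x, s x y)
  | 4 => fun x y => (f x y, s x y)

structure IsFr {X : Type} (R : X → X → Prop) (f s : X → X → X) : Prop where
  symm : ∀ x y, R x y → R y x
  ss : ∀ x y, R x y → s x y = s y x
  maps : ∀ k x y, R x y → R (FM f s k x y).1 (FM f s k x y).2
  inj : ∀ k x y x' y', R x y → R x' y' → FM f s k x y = FM f s k x' y' → x = x' ∧ y = y'

def Fr {X : Type} (R : X → X → Prop) : Prop := ∃ f s, IsFr R f s

theorem FM_map {X Y : Type} (g : Y → X) (f s : Y → Y → Y) (f' s' : X → X → X) (a b : Y)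
    (h1 : f' (g a) (g b) = g (f a b)) (h2 : f' (g b) (g a) = g (f b a))
    (h3 : s' (g a) (g b) = g (s a b)) (k) :
    FM f' s' k (g a) (g b) = (g (FM f s k a b).1, g (FM f s k a b).2) := by
  fin_cases k <;> simp [FM, h1, h2, h3]

theorem Fr.cover {X ι : Type} {Y : ι → Type} (S : ∀ i, Y i → Y i → Prop) (g : ∀ i, Y i → X)
    (hS : ∀ i, Fr (S i)) (hg : ∀ i, Function.Injective (g i)) (R : X → X → Prop)
    (hR : ∀ x y, R x y ↔ ∃ i a b, g i a = x ∧ g i b = y ∧ S i a b)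
    (hu : ∀ i j a b c d, S i a b → S j c d → g i a = g j c → g i b = g j d → i = j) :
    Fr R := by
  choose f s h using hS
  have hR' := fun x y (hxy : R x y) => (hR x y).1 hxy
  choose I A B hA hB hAB using hR'
  let f' : X → X → X := fun x y => if hxy : R x y then g _ (f _ (A x y hxy) (B x y hxy)) else x
  let s' : X → X → X := fun x y => if hxy : R x y then g _ (s _ (A x y hxy) (B x y hxy)) else x
  have key : ∀ i a b, S i a b → f' (g i a) (g i b) = g i (f i a b) ∧
      s' (g i a) (g i b) = g i (s i a b) := by
    intro i a b hab
    have hxy : R (g i a) (g i b) := (hR _ _).2 ⟨i, a, b, rfl, rfl, hab⟩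
    have e : I _ _ hxy = i := hu _ _ _ _ _ _ (hAB _ _ hxy) hab (hA _ _ hxy) (hB _ _ hxy)
    have h1 := hA _ _ hxy
    have h2 := hB _ _ hxy
    simp only [f', s', dif_pos hxy]
    generalize A _ _ hxy = a' at *
    generalize B _ _ hxy = b' at *
    generalize I _ _ hxy = i' at *
    subst e
    rw [hg _ h1, hg _ h2]; exact ⟨rfl, rfl⟩
  have key2 : ∀ i a b k, S i a b → FM f' s' k (g i a) (g i b) =
      (g i (FM (f i) (s i) k a b).1, g i (FM (f i) (s i) k a b).2) := fun i a b k hab =>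
    FM_map _ _ _ _ _ _ _ (key i a b hab).1 (key i b a ((h i).symm _ _ hab)).1 (key i a b hab).2 k
  refine ⟨f', s', ?_, ?_, ?_, ?_⟩
  · intro x y hxy
    obtain ⟨i, a, b, rfl, rfl, hab⟩ := (hR x y).1 hxy
    exact (hR _ _).2 ⟨i, b, a, rfl, rfl, (h i).symm _ _ hab⟩
  · intro x y hxy
    obtain ⟨i, a, b, rfl, rfl, hab⟩ := (hR x y).1 hxy
    rw [(key i a b hab).2, (key i b a ((h i).symm _ _ hab)).2, (h i).ss _ _ hab]
  · intro k x y hxy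
    obtain ⟨i, a, b, rfl, rfl, hab⟩ := (hR x y).1 hxy
    rw [key2 i a b k hab]
    exact (hR _ _).2 ⟨i, _, _, rfl, rfl, (h i).maps k _ _ hab⟩
  · intro k x y x' y' hxy hxy' he
    obtain ⟨i, a, b, rfl, rfl, hab⟩ := (hR x y).1 hxy
    obtain ⟨j, c, d, rfl, rfl, hcd⟩ := (hR x' y').1 hxy'
    rw [key2 i a b k hab, key2 j c d k hcd] at he
    simp only [Prod.mk.injEq] at he
    have := hu _ _ _ _ _ _ ((h i).maps k _ _ hab) ((h j).maps k _ _ hcd) he.1 he.2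
    subst this
    have h3 := (h i).inj k _ _ _ _ hab hcd (Prod.ext (hg _ he.1) (hg _ he.2))
    rw [h3.1, h3.2]; exact ⟨rfl, rfl⟩

theorem Fr.equiv {X Y : Type} {R : X → X → Prop} {S : Y → Y → Prop} (e : Y ≃ X)
    (h : ∀ a b, R (e a) (e b) ↔ S a b) (hS : Fr S) : Fr R := by
  refine Fr.cover (ι := Unit) (fun _ => S) (fun _ => e) (fun _ => hS) (fun _ => e.injective) R ?_
    (fun _ _ _ _ _ _ _ _ _ _ => rfl)
  intro x y
  constructor
  · intro hxy
    exact ⟨(), e.symm x, e.symm y, by simp, by simp, (h _ _).1 (by simpa using hxy)⟩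
  · rintro ⟨_, a, b, rfl, rfl, hab⟩
    exact (h _ _).2 hab

/-- complete multipartite frame -/
def MFr (K W : Type) : Prop := Fr (fun x y : K × W => x.1 ≠ y.1)

theorem MFr.congr {K K' W W' : Type} (e : K ≃ K') (e' : W ≃ W') (h : MFr K W) : MFr K' W' :=
  Fr.equiv (e.prodCongr e') (by intro a b; simp) h

def MFN (k h : ℕ) : Prop := MFr (Fin k) (Fin h)

theorem MFN.mfr {k h : ℕ} (H : MFN k h) {K W : Type} [Fintype K] [Fintype W]
    (hk : Fintype.card K = k) (hw : Fintype.card W = h) : MFr K W :=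
  MFr.congr (Fintype.equivFinOfCardEq hk).symm (Fintype.equivFinOfCardEq hw).symm H

theorem MFr.mfn {K W : Type} [Fintype K] [Fintype W] (H : MFr K W) {k h : ℕ} 
    (hk : Fintype.card K = k) (hw : Fintype.card W = h) : MFN k h :=
  MFr.congr (Fintype.equivFinOfCardEq hk) (Fintype.equivFinOfCardEq hw) H

/-- group divisible design with weights -/
theorem Fr.gdd {P Γ B W : Type} (γ : P → Γ) {Y : B → Type} (g : ∀ b, Y b → P)
    (hg : ∀ b, Function.Injective (fun y => γ (g b y)))
    (h1 : ∀ p q, γ p ≠ γ q → ∃ b y z, g b y = p ∧ g b z = q)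
    (h2 : ∀ b b' y z y' z', γ (g b y) ≠ γ (g b z) → g b y = g b' y' → g b z = g b' z' → b = b')
    (hM : ∀ b, MFr (Y b) W) :
    Fr (fun x y : P × W => γ x.1 ≠ γ y.1) := by
  have hg' : ∀ b, Function.Injective (g b) := fun b y z e => hg b (by simp [e])
  refine Fr.cover (fun b (x y : Y b × W) => x.1 ≠ y.1) (fun b x => (g b x.1, x.2)) hM ?_ _ ?_ ?_
  · rintro b ⟨y, w⟩ ⟨z, v⟩ h
    simp only [Prod.mk.injEq] at h
    rw [hg' _ h.1, h.2]
  · rintro ⟨p, w⟩ ⟨q, v⟩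
    constructor
    · intro h
      obtain ⟨b, y, z, rfl, rfl⟩ := h1 p q h
      exact ⟨b, (y, w), (z, v), rfl, rfl, fun e => h (by simp only at e; simp [e])⟩
    · rintro ⟨b, ⟨y, w'⟩, ⟨z, v'⟩, e1, e2, e3⟩
      simp only [Prod.mk.injEq] at e1 e2
      obtain ⟨rfl, rfl⟩ := e1
      obtain ⟨rfl, rfl⟩ := e2
      exact fun e => e3 (hg b e)
  · rintro b b' ⟨y, w⟩ ⟨z, v⟩ ⟨y', w'⟩ ⟨z', v'⟩ h _ e1 e2
    simp only [Prod.mk.injEq] at e1 e2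
    exact h2 b b' y z y' z' (fun e => h (hg b e)) e1.1 e2.1

theorem Fr.fill0 {Y Γ W : Type} (δ : Y → Γ) (h : Fr (fun x y : Y × W => δ x.1 ≠ δ y.1))
    (hf : ∀ c, MFr {y // δ y = c} W) : MFr Y W := by
  refine Fr.cover (ι := Option Γ) (Y := fun o => match o with | none => Y × W | some c => {y // δ y = c} × W)
    (fun o => match o with | none => fun x y => δ x.1 ≠ δ y.1 | some c => fun x y => x.1 ≠ y.1)
    (fun o => match o with | none => id | some c => fun x => (x.1.1, x.2)) ?_ ?_ _ ?_ ?_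
  · rintro (_ | c)
    · exact h
    · exact hf c
  · rintro (_ | c)
    · exact Function.injective_id
    · rintro ⟨⟨x, hx⟩, w⟩ ⟨⟨y, hy⟩, v⟩ e
      simpa using e
  · rintro ⟨x, w⟩ ⟨y, v⟩
    constructor
    · intro hxy
      by_cases hd : δ x = δ y
      · exact ⟨some (δ y), (⟨x, hd⟩, w), (⟨y, rfl⟩, v), rfl, rfl, fun e => hxy (congrArg Subtype.val e)⟩
      · exact ⟨none, (x, w), (y, v), rfl, rfl, hd⟩
    · rintro ⟨_ | c, a, b, e1, e2, e3⟩
      · simp only [id] at e1 e2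
        subst e1 e2
        exact fun e => e3 (congrArg δ e)
      · simp only [Prod.mk.injEq] at e1 e2
        simp only
        rw [← e1.1, ← e2.1]
        exact fun e => e3 (Subtype.ext e)
  · rintro (_ | c) (_ | c') a b a' b' h1 h2 e1 e2
    · rfl
    · simp only [id] at e1 e2
      subst e1 e2
      exact absurd (a'.1.2.trans b'.1.2.symm) h1
    · simp only [id] at e1 e2
      subst e1 e2
      exact absurd (a.1.2.trans b.1.2.symm) h2
    · simp only [Prod.mk.injEq] at e1
      rw [← a.1.2, ← a'.1.2, e1.1]

theorem Fr.fill1 {Y Γ W : Type} (δ : Y → Γ) (h : Fr (fun x y : Y × W => δ x.1 ≠ δ y.1))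
    (hf : ∀ c, MFr (Option {y // δ y = c}) W) : MFr (Option Y) W := by
  refine Fr.cover (ι := Option Γ) (Y := fun o => match o with | none => Y × W | some c => Option {y // δ y = c} × W)
    (fun o => match o with | none => fun x y => δ x.1 ≠ δ y.1 | some c => fun x y => x.1 ≠ y.1)
    (fun o => match o with | none => fun x => (some x.1, x.2) | some c => fun x => (x.1.map Subtype.val, x.2)) ?_ ?_ _ ?_ ?_
  · rintro (_ | c)
    · exact h
    · exact hf c
  · rintro (_ | c)
    · rintro ⟨x, w⟩ ⟨y, v⟩ e
      simpa using e
    · rintro ⟨x, w⟩ ⟨y, v⟩ e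
      simp only [Prod.mk.injEq] at e
      rw [Option.map_injective Subtype.val_injective e.1, e.2]
  · rintro ⟨x, w⟩ ⟨y, v⟩
    constructor
    · intro hxy
      rcases x with _ | x <;> rcases y with _ | y
      · exact absurd rfl hxy
      · exact ⟨some (δ y), (none, w), (some ⟨y, rfl⟩, v), rfl, rfl, by simp⟩
      · exact ⟨some (δ x), (some ⟨x, rfl⟩, w), (none, v), rfl, rfl, by simp⟩
      · by_cases hd : δ x = δ y
        · exact ⟨some (δ y), (some ⟨x, hd⟩, w), (some ⟨y, rfl⟩, v), rfl, rfl, by simpa using hxy⟩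
        · exact ⟨none, (x, w), (y, v), rfl, rfl, hd⟩
    · rintro ⟨_ | c, a, b, e1, e2, e3⟩
      · simp only [Prod.mk.injEq] at e1 e2
        simp only
        rw [← e1.1, ← e2.1]
        exact fun e => e3 (congrArg δ (Option.some.inj e))
      · simp only [Prod.mk.injEq] at e1 e2
        simp only
        rw [← e1.1, ← e2.1]
        exact fun e => e3 (Option.map_injective Subtype.val_injective e)
  · have aux : ∀ (c : Γ) (a b : Y × W) (a' b' : Option {y // δ y = c} × W), δ a.1 ≠ δ b.1 →
        some a.1 = a'.1.map Subtype.val → some b.1 = b'.1.map Subtype.val → False := by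
      rintro c a b ⟨_ | a', w⟩ ⟨_ | b', v⟩ h1 e1 e2
      · simp at e1
      · simp at e1
      · simp at e2
      · simp at e1 e2
        rw [e1, e2, a'.2, b'.2] at h1
        exact h1 rfl
    rintro (_ | c) (_ | c') a b a' b' h1 h2 e1 e2
    · rfl
    · exact (aux c' a b a' b' h1 (congrArg Prod.fst e1) (congrArg Prod.fst e2)).elim
    · exact (aux c a' b' a b h2 (congrArg Prod.fst e1).symm (congrArg Prod.fst e2).symm).elim
    · simp only [Prod.mk.injEq] at e1 e2
      have e1 := e1.1
      have e2 := e2.1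
      rcases a with ⟨_ | a, w⟩ <;> rcases a' with ⟨_ | a', w'⟩ <;> simp at e1
      · rcases b with ⟨_ | b, v⟩ <;> rcases b' with ⟨_ | b', v'⟩ <;> simp at e2
        · exact absurd rfl h1
        · rw [← b.2, ← b'.2, e2]
      · rw [← a.2, ← a'.2, e1]

/-- good parameters -/
def Good (n : ℕ) : Prop := MFN n 3

theorem good_one : Good 1 :=
  ⟨fun x _ => x, fun x _ => x, fun x y h => absurd (Subsingleton.elim _ _) h,
    fun x y h => absurd (Subsingleton.elim _ _) h, fun _ x y h => absurd (Subsingleton.elim _ _) h,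
    fun _ x y _ _ h => absurd (Subsingleton.elim _ _) h⟩


theorem td_fr {R K W : Type} [CommRing R] (α β : K → R)
    (hdet : ∀ i j, i ≠ j → IsUnit (α i * β j - α j * β i)) (T : K → Finset R)
    (hb : ∀ b : R × R, MFr {i // α i * b.1 + β i * b.2 ∈ T i} W) :
    Fr (fun x y : (Σ i, T i) × W => x.1.1 ≠ y.1.1) := by
  refine Fr.gdd (P := Σ i, T i) (γ := Sigma.fst) (B := R × R) (g := fun b y => ⟨y.1, ⟨_, y.2⟩⟩)
    ?_ ?_ ?_ hb
  · intro b y z h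
    exact Subtype.ext h
  · rintro ⟨i, u, hu⟩ ⟨j, v, hv⟩ hij
    obtain ⟨D, hD⟩ := hdet i j hij
    have hD' : (↑D⁻¹ : R) * (α i * β j - α j * β i) = 1 := by rw [← hD]; simp
    have e1 : α i * (↑D⁻¹ * (β j * u - β i * v)) + β i * (↑D⁻¹ * (α i * v - α j * u)) = u := by
      linear_combination u * hD'
    have e2 : α j * (↑D⁻¹ * (β j * u - β i * v)) + β j * (↑D⁻¹ * (α i * v - α j * u)) = v := by
      linear_combination v * hD'
    refine ⟨(↑D⁻¹ * (β j * u - β i * v), ↑D⁻¹ * (α i * v - α j * u)), ⟨i, by rw [e1]; exact hu⟩,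
      ⟨j, by rw [e2]; exact hv⟩, ?_, ?_⟩
    · simp [e1]
    · simp [e2]
  · rintro ⟨a, b⟩ ⟨a', b'⟩ ⟨i, hi⟩ ⟨j, hj⟩ ⟨i', hi'⟩ ⟨j', hj'⟩ hij e1 e2
    simp only at hij
    obtain ⟨h1, h2⟩ := Sigma.mk.inj e1
    obtain ⟨h3, h4⟩ := Sigma.mk.inj e2
    simp only at h1 h3
    subst h1 h3
    have h2 := congrArg Subtype.val (eq_of_heq h2)
    have h4 := congrArg Subtype.val (eq_of_heq h4)
    simp only at h2 h4
    obtain ⟨D, hD⟩ := hdet i j hij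
    have hD' : (↑D⁻¹ : R) * (α i * β j - α j * β i) = 1 := by rw [← hD]; simp
    ext
    · simp only
      linear_combination (a' - a) * hD' + ↑D⁻¹ * (β j * h2 - β i * h4)
    · simp only
      linear_combination (b' - b) * hD' + ↑D⁻¹ * (α i * h4 - α j * h2)

theorem td6 {R K : Type} [CommRing R] [Fintype R] [Fintype K] (α β : K → R)
    (hdet : ∀ i j, i ≠ j → IsUnit (α i * β j - α j * β i)) (t : K → ℕ)
    (ht : ∀ i, t i ≤ Fintype.card R) (h5 : 5 ≤ (Finset.univ.filter fun i => t i = Fintype.card R).card)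
    (h7 : Fintype.card K ≤ 7) (M5 : MFN 5 6) (M6 : MFN 6 6) (M7 : MFN 7 6)
    (hG : ∀ i, Good (2 * t i + 1)) : Good (2 * (∑ i, t i) + 1) := by
  have hT : ∀ i, ∃ T : Finset R, T.card = t i := fun i => by
    obtain ⟨T, -, hT⟩ := Finset.exists_subset_card_eq (s := (Finset.univ : Finset R)) (n := t i)
      (by simpa using ht i)
    exact ⟨T, hT⟩
  choose T hT using hT
  have F := td_fr (W := Fin 2 × Fin 3) α β hdet T (by
    intro b
    have h1 : Fintype.card {i // α i * b.1 + β i * b.2 ∈ T i} ≤ 7 :=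
      (Fintype.card_subtype_le _).trans h7
    have h2 : 5 ≤ Fintype.card {i // α i * b.1 + β i * b.2 ∈ T i} := by
      rw [Fintype.card_subtype]
      refine h5.trans (Finset.card_le_card ?_)
      intro i hi
      simp only [Finset.mem_filter, Finset.mem_univ, true_and] at hi ⊢
      have : T i = Finset.univ := by rw [← Finset.card_eq_iff_eq_univ, hT, hi]
      rw [this]; simp
    generalize hc : Fintype.card {i // α i * b.1 + β i * b.2 ∈ T i} = c at h1 h2
    have : c = 5 ∨ c = 6 ∨ c = 7 := by omega
    rcases this with rfl | rfl | rfl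
    · exact M5.mfr hc (by simp)
    · exact M6.mfr hc (by simp)
    · exact M7.mfr hc (by simp))
  have F2 : Fr (fun x y : ((Σ i, T i) × Fin 2) × Fin 3 => x.1.1.1 ≠ y.1.1.1) :=
    Fr.equiv (Equiv.prodAssoc _ _ _).symm (fun a b => Iff.rfl) F
  have F3 := Fr.fill1 (fun y : (Σ i, T i) × Fin 2 => y.1.1) F2 (by
    intro c
    refine (hG c).mfr ?_ (by simp)
    rw [Fintype.card_option]
    have e : {y : (Σ i, T i) × Fin 2 // y.1.1 = c} ≃ T c × Fin 2 :=
      { toFun := fun y => (y.2 ▸ y.1.1.2, y.1.2)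
        invFun := fun y => ⟨(⟨c, y.1⟩, y.2), rfl⟩
        left_inv := by rintro ⟨⟨⟨i, x⟩, j⟩, h⟩; simp only at h; subst h; rfl
        right_inv := by rintro ⟨x, j⟩; rfl }
    rw [Fintype.card_congr e]
    simp [hT]; ring)
  refine F3.mfn ?_ (by simp)
  simp [hT]; ring

theorem td3 {R K : Type} [CommRing R] [Fintype R] [Fintype K] (α β : K → R)
    (hdet : ∀ i j, i ≠ j → IsUnit (α i * β j - α j * β i))
    (hK : Good (Fintype.card K)) (hG : Good (Fintype.card R)) :
    Good (Fintype.card K * Fintype.card R) := by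
  have F := td_fr (W := Fin 3) α β hdet (fun _ => Finset.univ) (by
    intro b
    refine hK.mfr ?_ (by simp)
    simp)
  have F3 := Fr.fill0 (fun y : (Σ i : K, (Finset.univ : Finset R)) => y.1) F (by
    intro c
    refine hG.mfr ?_ (by simp)
    have e : {y : (Σ i : K, (Finset.univ : Finset R)) // y.1 = c} ≃ (Finset.univ : Finset R) :=
      { toFun := fun y => y.1.2
        invFun := fun y => ⟨⟨c, y⟩, rfl⟩
        left_inv := by rintro ⟨⟨i, x⟩, h⟩; simp only at h; subst h; rfl
        right_inv := by intro x; rfl }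
    rw [Fintype.card_congr e]
    simp)
  refine F3.mfn ?_ (by simp)
  simp

/-- columns over a field -/
theorem det_field {F K : Type} [Field F] (c : K → F) (hc : Function.Injective c) :
    ∀ i j, i ≠ j → IsUnit ((1:F) * c j - 1 * c i) := by
  intro i j hij
  rw [isUnit_iff_ne_zero]
  intro h
  exact hij (hc (by linear_combination -h))

theorem zu (g d : ℕ) (h : Nat.Coprime d g) : IsUnit ((d : ℕ) : ZMod g) := (ZMod.isUnit_iff_coprime d g).2 h

def colA (g k : ℕ) : Fin (k+1) → ZMod g := fun i => if i.1 < k then 1 else 0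
def colB (g k : ℕ) : Fin (k+1) → ZMod g := fun i => if i.1 < k then (i.1 : ZMod g) else 1

theorem det_z (g k : ℕ) (h : ∀ d, 0 < d → d < k → Nat.Coprime d g) :
    ∀ i j, i ≠ j → IsUnit (colA g k i * colB g k j - colA g k j * colB g k i) := by
  have aux : ∀ i j : Fin (k+1), i < j → IsUnit (colA g k i * colB g k j - colA g k j * colB g k i) := by
    intro i j hij
    have hij' : i.1 < j.1 := hij
    have hi : i.1 < k := by omega
    by_cases hj : j.1 < k
    · simp only [colA, colB, hi, hj, if_true]
      have := zu g (j.1 - i.1) (h _ (by omega) (by omega))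
      rw [Nat.cast_sub hij'.le] at this
      simpa using this
    · simp [colA, colB, hi, hj]
  intro i j hij
  rcases lt_or_gt_of_ne hij with h | h
  · exact aux i j h
  · have := (aux j i h).neg
    convert this using 1
    ring

theorem cop6 {g : ℕ} (h : Nat.Coprime g 6) : ∀ d, 0 < d → d < 5 → Nat.Coprime d g := by
  have h2 : Nat.Coprime g 2 := Nat.Coprime.coprime_dvd_right (by norm_num) h
  have h3 : Nat.Coprime g 3 := Nat.Coprime.coprime_dvd_right (by norm_num) h
  intro d h0 h5
  interval_cases d
  · simp
  · exact h2.symm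
  · exact h3.symm
  · exact (Nat.Coprime.pow_right 2 h2).symm

theorem cop30 {g : ℕ} (h : Nat.Coprime g 30) : ∀ d, 0 < d → d < 6 → Nat.Coprime d g := by
  intro d h0 h5
  have h1 : Nat.Coprime g 5 := Nat.Coprime.coprime_dvd_right (by norm_num) h
  have h2 := cop6 (Nat.Coprime.coprime_dvd_right (show 6 ∣ 30 by norm_num) h)
  by_cases hd : d = 5
  · subst hd; exact h1.symm
  · exact h2 d h0 (by omega)


theorem recZ6 (M5 : MFN 5 6) (M6 : MFN 6 6) (M7 : MFN 7 6) (g t : ℕ) (hg : Nat.Coprime g 6) (hg0 : 0 < g) (ht : t ≤ g)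
    (h1 : Good (2 * g + 1)) (h2 : Good (2 * t + 1)) : Good (2 * (5 * g + t) + 1) := by
  have : NeZero g := ⟨by omega⟩
  have := td6 (R := ZMod g) (K := Fin 6) (colA g 5) (colB g 5) (det_z g 5 (cop6 hg))
    ![g, g, g, g, g, t] (by intro i; rw [ZMod.card]; fin_cases i <;> simp [ht])
    (by
      rw [ZMod.card]
      have : ({0,1,2,3,4} : Finset (Fin 6)).card = 5 := by decide
      refine this.symm.le.trans (Finset.card_le_card ?_)
      intro i hi
      fin_cases i <;> simp at hi ⊢) (by simp) M5 M6 M7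
    (by intro i; fin_cases i <;> simpa)
  simp only [Fin.sum_univ_succ] at this
  simp at this
  convert this using 2; ring

theorem recZ7 (M5 : MFN 5 6) (M6 : MFN 6 6) (M7 : MFN 7 6) (g t u : ℕ) (hg : Nat.Coprime g 30) (hg0 : 0 < g) (ht : t ≤ g) (hu : u ≤ g)
    (h1 : Good (2 * g + 1)) (h2 : Good (2 * t + 1)) (h3 : Good (2 * u + 1)) :
    Good (2 * (5 * g + t + u) + 1) := by
  have : NeZero g := ⟨by omega⟩
  have := td6 (R := ZMod g) (K := Fin 7) (colA g 6) (colB g 6) (det_z g 6 (cop30 hg))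
    ![g, g, g, g, g, t, u] (by intro i; rw [ZMod.card]; fin_cases i <;> simp [ht, hu])
    (by
      rw [ZMod.card]
      have : ({0,1,2,3,4} : Finset (Fin 7)).card = 5 := by decide
      refine this.symm.le.trans (Finset.card_le_card ?_)
      intro i hi
      fin_cases i <;> simp at hi ⊢) (by simp) M5 M6 M7
    (by intro i; fin_cases i <;> simpa)
  simp only [Fin.sum_univ_succ] at this
  simp at this
  convert this using 2; ring

theorem rec9 (M5 : MFN 5 6) (M6 : MFN 6 6) (M7 : MFN 7 6) (t u : ℕ) (ht : t ≤ 9) (hu : u ≤ 9)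
    (h1 : Good 19) (h2 : Good (2 * t + 1)) (h3 : Good (2 * u + 1)) :
    Good (2 * (45 + t + u) + 1) := by
  have : Fact (Nat.Prime 3) := ⟨by norm_num⟩
  let F := GaloisField 3 2
  have : Fintype F := Fintype.ofFinite _
  have hF : Fintype.card F = 9 := by
    have := GaloisField.card 3 2 (by norm_num)
    rw [Nat.card_eq_fintype_card] at this
    rw [this]; norm_num
  have hc : ∃ c : Fin 7 → F, Function.Injective c := by
    have := Function.Embedding.nonempty_of_card_le (α := Fin 7) (β := F) (by rw [hF]; simp)
    exact ⟨this.some, this.some.injective⟩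
  obtain ⟨c, hc⟩ := hc
  have := td6 (R := F) (K := Fin 7) (fun _ => 1) c (det_field c hc)
    ![9, 9, 9, 9, 9, t, u] (by intro i; rw [hF]; fin_cases i <;> simp [ht, hu])
    (by
      rw [hF]
      have : ({0,1,2,3,4} : Finset (Fin 7)).card = 5 := by decide
      refine this.symm.le.trans (Finset.card_le_card ?_)
      intro i hi
      fin_cases i <;> simp at hi ⊢) (by simp) M5 M6 M7
    (by intro i; fin_cases i <;> simpa)
  simp only [Fin.sum_univ_succ] at this
  simp at this
  convert this using 2; ring

theorem rec3Z (g : ℕ) (hg : Nat.Coprime g 6) (hg0 : 0 < g) (h1 : Good 5) (h2 : Good g) :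
    Good (5 * g) := by
  have : NeZero g := ⟨by omega⟩
  have := td3 (R := ZMod g) (K := Fin 5) (colA g 4) (colB g 4)
    (det_z g 4 (fun d h0 h => cop6 hg d h0 (by omega))) (by simpa) (by simpa)
  simpa using this

theorem rec3Z7 (g : ℕ) (hg : Nat.Coprime g 30) (hg0 : 0 < g) (h1 : Good 7) (h2 : Good g) :
    Good (7 * g) := by
  have : NeZero g := ⟨by omega⟩
  have := td3 (R := ZMod g) (K := Fin 7) (colA g 6) (colB g 6)
    (det_z g 6 (cop30 hg)) (by simpa) (by simpa)
  simpa using this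

theorem rec3F (k : ℕ) (hk : k ≤ 9) (h1 : Good k) (h2 : Good 9) :
    Good (k * 9) := by
  have : Fact (Nat.Prime 3) := ⟨by norm_num⟩
  let F := GaloisField 3 2
  have : Fintype F := Fintype.ofFinite _
  have hF : Fintype.card F = 9 := by
    have := GaloisField.card 3 2 (by norm_num)
    rw [Nat.card_eq_fintype_card] at this
    rw [this]; norm_num
  have hc : ∃ c : Fin k → F, Function.Injective c := by
    have := Function.Embedding.nonempty_of_card_le (α := Fin k) (β := F) (by rw [hF]; simpa)
    exact ⟨this.some, this.some.injective⟩
  obtain ⟨c, hc⟩ := hc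
  have := td3 (R := F) (K := Fin k) (fun _ => 1) c (det_field c hc) (by simpa) (by rwa [hF])
  rw [hF] at this
  simpa using this


/-- evaluation order helper -/
def force {α : Type} (n : ℕ) (k : ℕ → α) : α := Nat.rec (k 0) (fun m _ => k (Nat.succ m)) n

theorem force_eq {α : Type} (n : ℕ) (k : ℕ → α) : force n k = k n := by
  cases n <;> rfl

/-- checking disjointness of masks (the low 32 bits of every number are junk) -/
def eng (m : ℕ → ℕ) (c : ℕ) : ℕ → Bool :=
  Nat.rec (fun _ => true) (fun c ih acc =>
    force (m c) fun v => cond (Nat.beq (Nat.land (Nat.shiftRight acc 32) (Nat.shiftRight v 32)) 0)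
      (force (Nat.lor (Nat.shiftLeft (Nat.lor (Nat.shiftRight acc 32) (Nat.shiftRight v 32)) 32) c) ih) false) c

theorem eng_sound (m : ℕ → ℕ) (c acc : ℕ) (h : eng m c acc = true) :
    ∀ c' < c, (acc >>> 32) &&& (m c' >>> 32) = 0 ∧ ∀ c'' < c', (m c'' >>> 32) &&& (m c' >>> 32) = 0 := by
  induction c generalizing acc with
  | zero => intro c' hc; omega
  | succ c ih =>
    have h' : cond (Nat.beq (Nat.land (acc >>> 32) (m c >>> 32)) 0)
        (eng m c (((acc >>> 32) ||| (m c >>> 32)) <<< 32 ||| c)) false = true := by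
      have : eng m (c+1) acc = force (m c) (fun v => cond (Nat.beq (Nat.land (Nat.shiftRight acc 32) (Nat.shiftRight v 32)) 0)
        (force (Nat.lor (Nat.shiftLeft (Nat.lor (Nat.shiftRight acc 32) (Nat.shiftRight v 32)) 32) c) (eng m c)) false) := rfl
      rw [this, force_eq, force_eq] at h
      exact h
    rw [Bool.cond_eq_ite] at h'
    split_ifs at h' with hb
    have hb : (acc >>> 32) &&& (m c >>> 32) = 0 := Nat.eq_of_beq_eq_true hb
    have ih := ih _ h'
    have key : ∀ v, ((((acc >>> 32) ||| (m c >>> 32)) <<< 32 ||| c) >>> 32) &&& v = 0 →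
        (acc >>> 32) &&& v = 0 ∧ (m c >>> 32) &&& v = 0 := by
      intro v hv
      rw [Nat.shiftRight_or_distrib, Nat.shiftLeft_shiftRight, Nat.and_or_distrib_right,
        Nat.and_or_distrib_right] at hv
      have hv := (Nat.or_eq_zero_iff.1 hv).1
      exact Nat.or_eq_zero_iff.1 hv
    intro c' hc'
    rcases Nat.lt_succ_iff_lt_or_eq.1 hc' with hc | rfl
    · exact ⟨(key _ (ih c' hc).1).1, (ih c' hc).2⟩
    · refine ⟨hb, fun c'' hc'' => ?_⟩
      rw [Nat.and_comm]
      exact (key _ (ih c'' hc'').1).2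

theorem eng_bit {m : ℕ → ℕ} {c : ℕ} (h : eng m c 4294967296 = true) {a b i : ℕ} (ha : a < c) (hb : b < c)
    (h1 : (m a).testBit (32 + i) = true) (h2 : (m b).testBit (32 + i) = true) : a = b := by
  have aux : ∀ a b, a < c → b < a → (m a).testBit (32 + i) = true → (m b).testBit (32 + i) = true → False := by
    intro a b ha hb h1 h2
    have := (eng_sound m c _ h a ha).2 b hb
    have := congrArg (fun v => v.testBit i) this
    simp [Nat.testBit_shiftRight, h1, h2] at this
  rcases lt_trichotomy a b with hl | hl | hl
  · exact (aux b a hb hl h2 h1).elim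
  · exact hl
  · exact (aux a b ha hl h1 h2).elim

theorem eng_loc {m : ℕ → ℕ} {c : ℕ} (h : eng m c 4294967296 = true) {a : ℕ} (ha : a < c) : m a ≠ 4294967296 := by
  intro e
  have := (eng_sound m c _ h a ha).1
  rw [e] at this
  simp at this

/-- mask with five bits -/
def mk5 (t q a b c d e : ℕ) : ℕ :=
  Nat.lor (Nat.shiftLeft (Nat.lor (Nat.shiftLeft 1 a) (Nat.lor (Nat.shiftLeft 1 (Nat.add q b))
    (Nat.lor (Nat.shiftLeft 1 (Nat.add (Nat.mul 2 q) c)) (Nat.lor (Nat.shiftLeft 1 (Nat.add (Nat.mul 3 q) d))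
      (Nat.shiftLeft 1 (Nat.add (Nat.mul 4 q) e)))))) 33) t

def sel5 (a b c d e : ℕ) : Fin 5 → ℕ
  | 0 => a
  | 1 => b
  | 2 => c
  | 3 => d
  | 4 => e

theorem mk5_eq (t q a b c d e : ℕ) : mk5 t q a b c d e =
    ((1 <<< a) ||| ((1 <<< (q + b)) ||| ((1 <<< (2 * q + c)) ||| ((1 <<< (3 * q + d)) ||| (1 <<< (4 * q + e)))))) <<< 33 ||| t := rfl

theorem mk5_bit (t q a b c d e : ℕ) (k : Fin 5) :
    (mk5 t q a b c d e).testBit (32 + (k.val * q + sel5 a b c d e k + 1)) = true := by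
  rw [mk5_eq, Nat.testBit_or, Nat.testBit_shiftLeft]
  have : ∀ z, 32 + (z + 1) - 33 = z := fun z => by omega
  rw [this]
  fin_cases k <;> simp [sel5, Nat.testBit_or, Nat.testBit_shiftLeft] <;> left <;> omega

/-- mask of a pair -/
def mp (N w : ℕ) (f s : ℕ → ℕ → ℕ) (t : ℕ) : ℕ :=
  force (Nat.div t N) fun x => force (Nat.mod t N) fun y =>
  cond (Nat.beq (Nat.div x w) (Nat.div y w)) 0
  (force (f x y) fun a => force (f y x) fun b => force (s x y) fun c =>
  force (Nat.div x w) fun hx => force (Nat.div a w) fun ha => force (Nat.div b w) fun hb =>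
  force (Nat.div c w) fun hc =>
  cond (and (Nat.ble (Nat.succ a) N) (and (Nat.ble (Nat.succ b) N) (and (Nat.ble (Nat.succ c) N)
    (and (Nat.beq c (s y x)) (and (not (Nat.beq hx ha)) (and (not (Nat.beq hx hb))
    (and (not (Nat.beq ha hb)) (and (not (Nat.beq hx hc)) (not (Nat.beq ha hc))))))))))
  (mk5 t (Nat.mul N N) (Nat.add (Nat.mul x N) a) (Nat.add (Nat.mul x N) b) (Nat.add (Nat.mul a N) b)
    (Nat.add (Nat.mul x N) c) (Nat.add (Nat.mul a N) c)) 4294967296)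

theorem mp_eq (N w : ℕ) (f s : ℕ → ℕ → ℕ) (x y : ℕ) (hx : x < N) (hy : y < N) (h : x / w ≠ y / w)
    (hm : mp N w f s (x * N + y) ≠ 4294967296) :
    (f x y < N ∧ f y x < N ∧ s x y < N ∧ s x y = s y x ∧ x / w ≠ f x y / w ∧ x / w ≠ f y x / w ∧
     f x y / w ≠ f y x / w ∧ x / w ≠ s x y / w ∧ f x y / w ≠ s x y / w) ∧
    mp N w f s (x * N + y) = mk5 (x * N + y) (N * N) (x * N + f x y) (x * N + f y x) (f x y * N + f y x)
      (x * N + s x y) (f x y * N + s x y) := by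
  have e1 : Nat.div (x * N + y) N = x := by
    change (x * N + y) / N = x
    rw [Nat.div_eq_iff (by omega)]
    omega
  have e2 : Nat.mod (x * N + y) N = y := by
    change (x * N + y) % N = y
    rw [Nat.mul_add_mod_of_lt hy]
  unfold mp at hm ⊢
  simp only [force_eq, e1, e2] at hm ⊢
  have e3 : Nat.beq (x.div w) (y.div w) = false := by
    exact Bool.eq_false_iff.2 fun e => h (Nat.eq_of_beq_eq_true e)
  rw [e3, cond_false] at hm ⊢
  rw [Bool.cond_eq_ite] at hm ⊢
  split_ifs at hm ⊢ with hc
  · refine ⟨?_, rfl⟩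
    simp only [Bool.and_eq_true, Nat.ble_eq, Nat.beq_eq, Bool.not_eq_true', Bool.eq_false_iff, ne_eq] at hc
    exact hc
  · exact absurd rfl hm

def chk (k w : ℕ) (f s : ℕ → ℕ → ℕ) : Bool :=
  force (Nat.mul k w) fun N => eng (mp N w f s) (Nat.mul N N) 4294967296

theorem MFN.of_chk (k w : ℕ) (f s : ℕ → ℕ → ℕ) (h : chk k w f s = true) : MFN k w := by
  unfold chk at h
  rw [force_eq] at h
  change eng (mp (k * w) w f s) (k * w * (k * w)) 4294967296 = true at h
  have hcode : ∀ x y, x < k * w → y < k * w → x * (k * w) + y < k * w * (k * w) := by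
    intro x y hx hy
    have : (x + 1) * (k * w) ≤ k * w * (k * w) := Nat.mul_le_mul_right _ hx
    linarith
  have hinj : ∀ x y x' y', y < k * w → y' < k * w → x * (k * w) + y = x' * (k * w) + y' → x = x' ∧ y = y' := by
    intro x y x' y' hy hy' he
    have h1 : y = y' := by
      have := congrArg (· % (k * w)) he
      simpa [Nat.mul_add_mod_of_lt hy, Nat.mul_add_mod_of_lt hy'] using this
    subst h1
    refine ⟨Nat.eq_of_mul_eq_mul_right (show 0 < k * w by omega) (by omega), rfl⟩
  have key := fun (x y : Fin (k * w)) (hxy : x.val / w ≠ y.val / w) =>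
    mp_eq (k * w) w f s x y x.2 y.2 hxy (eng_loc h (hcode x y x.2 y.2))
  suffices H : Fr (fun x y : Fin (k * w) => x.val / w ≠ y.val / w) by
    refine Fr.equiv finProdFinEquiv.symm ?_ H
    intro a b
    have : ∀ a : Fin (k * w), (finProdFinEquiv.symm a).1.val = a.val / w := fun a => rfl
    simp only [ne_eq, ← this, Fin.val_inj]
  let f' : Fin (k * w) → Fin (k * w) → Fin (k * w) := fun x y =>
    if hxy : x.val / w ≠ y.val / w then ⟨f x y, (key x y hxy).1.1⟩ else x
  let s' : Fin (k * w) → Fin (k * w) → Fin (k * w) := fun x y =>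
    if hxy : x.val / w ≠ y.val / w then ⟨s x y, (key x y hxy).1.2.2.1⟩ else x
  have hf' : ∀ x y : Fin (k * w), x.val / w ≠ y.val / w → (f' x y).val = f x y := by
    intro x y hxy; simp only [f', dif_pos hxy]
  have hs' : ∀ x y : Fin (k * w), x.val / w ≠ y.val / w → (s' x y).val = s x y := by
    intro x y hxy; simp only [s', dif_pos hxy]
  have hcd : ∀ kk (x y : Fin (k * w)), x.val / w ≠ y.val / w →
      sel5 (x * (k * w) + f x y) (x * (k * w) + f y x) (f x y * (k * w) + f y x)
      (x * (k * w) + s x y) (f x y * (k * w) + s x y) kk =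
      (FM f' s' kk x y).1.val * (k * w) + (FM f' s' kk x y).2.val := by
    intro kk x y hxy
    fin_cases kk <;> simp [FM, sel5, hf' x y hxy, hf' y x hxy.symm, hs' x y hxy]
  refine ⟨f', s', fun x y h => h.symm, ?_, ?_, ?_⟩
  · intro x y hxy
    apply Fin.ext
    rw [hs' x y hxy, hs' y x hxy.symm]
    exact (key x y hxy).1.2.2.2.1
  · intro kk x y hxy
    have := (key x y hxy).1
    fin_cases kk <;> simp only [FM, hf' x y hxy, hf' y x hxy.symm, hs' x y hxy] <;> tauto
  · intro kk x y x' y' hxy hxy' he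
    have h1 := mk5_bit (x * (k * w) + y) (k * w * (k * w)) (x * (k * w) + f x y) (x * (k * w) + f y x) (f x y * (k * w) + f y x)
      (x * (k * w) + s x y) (f x y * (k * w) + s x y) kk
    have h2 := mk5_bit (x' * (k * w) + y') (k * w * (k * w)) (x' * (k * w) + f x' y') (x' * (k * w) + f y' x') (f x' y' * (k * w) + f y' x')
      (x' * (k * w) + s x' y') (f x' y' * (k * w) + s x' y') kk
    rw [← (key x y hxy).2, hcd kk x y hxy, he] at h1
    rw [← (key x' y' hxy').2, hcd kk x' y' hxy'] at h2
    have := eng_bit h (hcode x y x.2 y.2) (hcode x' y' x'.2 y'.2) h1 h2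
    have := hinj _ _ _ _ y.2 y'.2 this
    exact ⟨Fin.ext this.1, Fin.ext this.2⟩

def tsh (pM a x : ℕ) : ℕ := cond (Nat.ble pM x) x (Nat.mod (Nat.add x a) pM)

def tf2 (pM M N T a x y : ℕ) : ℕ :=
  tsh pM a (Nat.mod (Nat.shiftRight T (Nat.mul 7 (Nat.add
    (Nat.mul (cond (Nat.ble pM x) (Nat.add (Nat.sub x pM) M) (Nat.mod x M)) N) (tsh pM (Nat.sub pM a) y)))) 128)

def tf (p M N T x y : ℕ) : ℕ :=
  force (Nat.mul p M) fun pM =>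
  force (cond (Nat.ble pM x) (cond (Nat.ble pM y) 0 (Nat.sub y (Nat.mod y M))) (Nat.sub x (Nat.mod x M)))
    fun a => tf2 pM M N T a x y

theorem t9 : MFN 9 3 := MFN.of_chk 9 3 (tf 3 9 27
  18597415958677194566277782896232199435838612476604936032508656111902489237601983598674532557754789763198159642150011520933547737037454183966471346016496369995010717204772872068133021610235144940732306576163129505833797624395381668899052292842357265068236563609930463488331875568460486797582048999247585650037550487140066993779338687382134507500406280077768839365948109849005673478201720978769152393104526501978559832475627887530053549643018310345960080603933459888708516764243916734924674815465638286753724891136) (tf 3 9 27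
  8903663428882450974040756828813848420163153103118845989941499099411492450186618517272605094952806237763150193300957729809256233968095563959864273281986226757805494547729165470265639075890073723796454120763339695779021126553425137018249815835449434502574824982555273224335702347907334764350589135404792553330486778228960037658012540915847707213593019205311082659866539047790411298790059934841858168463958681299822612138742645656680451154997112311184743310745898450738032228377084217947854487334321595073341423616) (by decide +kernel)

theorem t15 : MFN 15 3 := MFN.of_chk 15 3 (tf 5 9 45
  3558301950395926578929765631899360598158586528340271433464108181412018659146166892424661171974237744931145985890794119432258619463792460981368394899227458692236734222977758609649520584108309298292516971822746040247075130445424996657129993710200374097236383358833408778325558234490124021671173204339089149092844575079596946635017689723904921175738968088771831863307903574611824352724244525925827351687216087410842284027192743709299668316271639646351764202112670434888476560975056389570609089237947789680733274942497764142588407747872081885423562557336945753331627243338102389233709564263721376323065570588635119589439494698490497687384876248331990968011011999184908369202813669802098154691709087796305096444210749271711806679793252235284169909586086853287271673453699406121603086277598590919340444883288611691561714295339826263093069906450721770836066304) (tf 5 9 45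
  5404720384757750398680334954030812876838671859081741577204518780928675305527147609248807595198490708081914510632645489142268687900934273641693955188611244552003201798495215904190785892858164569826525224176756414763814802850041729271068265754076600768972966658194459235638671666027866178487840723115616473697372865387748531828325577482532087477881542237815239341474255000958321154797714462797811264292774590505676917304159939551187747128271189358705906953777283841734185574406464738195695864037152592400541998880321647500257708415633410339588128824503417606137932927990208186933557063953951974348222473260407072951214605043656922485147475297180513222474595426124292712738033440898942894579375886775877257128720458728107082723185321926722756300124332031223263602951649621965944667260674263321932775577788548932009036993734871543926184709328121251783245824) (by decide +kernel)

theorem t21 : MFN 21 3 := MFN.of_chk 21 3 (tf 7 9 63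
  2559785674913564094658389500523576674959914697221679308279779370579105298367758684674676314714171604816728647448828745853104130208948098799509805900811574703371390943764878923880621940099908642121793774183202207739799581840751785258770598995052568993370070641994852334379911507611143977639721510081698117269341972445673510018909182694751294188695077044552819165749254599413871537054764792921537870917858998171809077767297944382340340923743778283119063653064627111115331403654872194602228794741039549740583598162472067129409073294946656468332337133685512340727372423523295674568826698644320580504426894442658948895534503134327309387536191550961450844008441642068124343148130786757397622863155249895868454926673918310925672967770527213103510588595262480081054828806106973845781077309617580243185399041849081882764767552868563488351279400579251976472287807286306531163771989075600131249662322152096801057132761805177423886436638197635590358260322550789318826697015094776905085320562893737949219793351615006366418830358779850955499629992680635517597353231468209056660058335218643309265584391718335485311883695075123163926132243889254867173923890926072881856242464225047943033651115492200227482370048) (tf 7 9 63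
  1679224408026533109154239410766137613047202828484712258641131635123084668724569752264898680493446144927271659593595793304921107306959270534669825145329494523426844698181602808498706540138755893485325704665331768035742238743431766395797234291894785842176406837183145851996380749387361619941054316519730105686355778194865750841184690085339934480907450720653791298897294262587392663038489544651492142379333380225519932724273299070457109541826000943634746615077021164552904966800584327447103241564184747666615587456367138598119527479633533683296875153416994706879514120622543785241338474014863112137614349194464162851134413065376782377721771783788604998090690171433027468971868797123907498802510185969993457003266126257425889266838190671352224074057043879468880924892407390063379471763962341440946398717398016723056574927279974639301636126831647359568156780894815954848586857133424368442738722436172904899082390339467355796305940384464661571737538801019956438003878991839248939191727016245443899116924010428389459460777763119720255221680937730301770156978223218701731360247264114507536070306496905756190567788392395765952298309898073947344205667463828884348964012312944881334524857459492185264095232) (by decide +kernel)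

theorem t39 : MFN 39 3 := MFN.of_chk 39 3 (tf 13 9 117
  59819906723804667702908753927283404720758758250011591303066060531631241574916485133780749587274623096374525428961906904952354512447921144910103547478449038511190565363241595177155166940255700632333935636087966398233033662522483151231516105045615891382856550936540549365148792128911924507669627493322059402204610185199221372426281808149689971211104651339369868847874257129356226221958245907549369311828481531172034094240048005317830325409866962003696643844315663337687790209209000474589705896524506949704918769661159965941220152293521154787481909563565452929446544547704586132391147858909697665416969454381529984371543055914314353644959924105945766745472974439120239088429892065488932873028794954738392929478005379220857495134919671710001113273496695464305111390422392632374046478908382169272234415459644064174941261610533200941753418230170714355279016440749131084865299457774139671754283582635521038538833584848218238253794515625169992086249983011078276181828858108455991524129429753674382770316138388641547642098011432630409005063777397694331422719207271928975548534420731710986086865880704325068744306570791129612529006609466086051604096268160803995643363262719578273150458098215353385912838304945963993696530364351621121203490421806921129523586132637513853422838844011321239667974671513546143626727830751939080969872081010444792672752858887804431932015544833415746774147862244990852868402317388756698920198372018724576974830952903762805561161843667673574825012614017315694745920206882240781770836415473547291185304169362646594125680251126073754968340390914245404660638204858889046877127822342560635896561130975627873520188380566523802824386775372322439644290425809548522813708647206487736237787205772400951476326608054717324714209197501639376271007721134170923931167541706597334327947955977050931456491147210761412878199817477506783818391349124136156286010996878770173547475519282831963562399612983983251641942142382750890845752573480895709055005922574287603182630619939275182133901636564132655289705609777977811342653133093015814209391276769223355491111112947164635558420262252709044186679036366721224995678295428447756334969827251994755978780543850565501660120553668831438341015753036183966321065775096142428635136)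 (tf 13 9 117
  37911265751679197658046127870480056944126138232131723973621210087901458540736622688411925585188253199673429870004975325578231565971792920184741847888994973862160253669403107775294782928106843367248400721585757582367410774279830487527061054728248071283661184796006995314058298890469299361696561302702587391280172946786439163643872981994167672625384383085526098643764779301992418620033259227565177353635883376856957851625435054598174953466053227364814797599769600708833129600825288179220569184379177564454247005357881337519166784297670399149001450534372192075839900626928250059177664473161499277905668561870570273735616769134571803276843339264258683588991390256749234189467665342551056463816176940121568594050753956844809217108863214455967974784074180591301569684811032764755628641775674410972974098025206432975690356238282082939013046857395176985308317677847381780876939456519423161988313443566500254200814757936630839614615822302784944025072044349507448026425284905072378094333468784178652889828756164355654986821735244839032508593059779437437136075873060089067697379769508099853719876632939792078589800073745277894071798367261618471997999479349152434837114283277272432216043189741118147821223324597327695930857079650475591787692161465546172382011063722101477087119501271600736648062722626704740067247218538683251716576309308411253227507244347823606788435872753217751665280067884437181785886087155563734081847423027416217796463233777024383992619795161979522147702281160782418221587670413324681077669200773919946750657651559986878840320036678658068490360702802996853938073164113474658781546944210075235258737510381714271061411402852797153560412847504880315885212275837418913616413168888569009476118112853200851322334317403277356093443830160931286032691687883842380782239221426222547676711901284749124399285434007919577553350311696735641502741162984148945257510837512331455337445183453001772996313376304651281354307103185305688340819463247157186936423737349038570704212311907634481568285864018718346454736720704755172028027701091381217982273546616612308976253837236228984249054103749090753360207316270652480678278225524235068641195588705725029533859330069922099093359754277896772191020420427739656754449994901110900391936)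 (by decide +kernel)

theorem t27 : MFN 27 3 := MFN.of_chk 27 3 (tf 13 6 81
  6645280709186443183646741842175062931010639443726178231355534849764484274898636457378009335170784586740594168857985857667519867996912594812465526434012907315287448404338552706860385226401241695479770395051784557261486394658638845990425047249142866617063244876915132592988940123071363862606235730641968542524245001742405498684952893387905002547695495385926378007243300893484820302557975607769883998876708883298853463418423967063250609362106185257390319646107606045467710960400173882602373470290002585306384279207157051032786753434145747870425909221561524968821635849065618776540475610811645188500983764299016341122178315500172597940844302533802555182703556291120355600149075572195384666451238107342211859452573171675524583770722633011253506351562781369846076390292071891312887974513292579024613249592355325280568455641247084061353307214498179755836262867628836524892167840827091759037570179828610637010900206042629259667151075625178391227621114301357065279809840105079717697066780295757049391482642315423323632822057687731863046164029164214894380267199636222772239466238969791023437471815299496686092273704058061777011978917381902736316575245594907418967772254784637299800558834328728682641743550931540754094403366717263450699015991109137854281201469208565474108832665773962451289852082875307592610045057462169443061501102396777466526286809978961575660351280700349156841993797632) (tf 13 6 81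
  6758950256332284202635232121208307260019983186288432441452181154173285778464257116807288950842441232433752858876785194158558343868351292571520323257449753087659024018861403599430179898404475896620741110489303571457034868544373829101488626772533563202218926959944109091168723268909915756032692950884117547273408401006965848001836762273693165859846486377728966145515072680247297771271737103341315887305764880404147311328454733583897000436613198421559453130932052730739956796926147373708009998050033397133397727291941566096788926895044458735139662991496065477852673805910404295485991993578385604223300423778866856265299020288281761292792457869619886405143407744369422511065744475868752449305648369538335543674100062123291015155987873287863149591931030318756143048707825131582190312851306474604415282638154732711415247173380357930102624739762455307885500208847742965714506231914345969174892684197168681271567468204808975659001381008688481885498870746032622658208456005601404365701888616533093132742014678506941004569548574373332418344316140739819958729251619268124206487859337428592645127108963260182189142759137556512885083304096744722017610732150574280869372885310060797434216521224923310764691107806908259097608494237634690317750997409427040855988985132156992996063635775597982986773955753926359530458759361040873289998646735820090324887173435318936565012596110875184297211330560) (by decide +kernel)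

theorem u5 : MFN 5 6 := MFN.of_chk 5 6 (tf 5 6 30
  1725540904583770852869240782099529883258431358572393645737393307682069999704319273389605495290844816217789896002856680316464178804123364544475042115268931256394223206732994168904768978594833797818754068812612589558878161143152817501780881545268893024488724236768711070656123788158243979946794320910898798504784383643968898783448188042147202811148092851561270851180421327118925824) (tf 5 6 30
  2042887415103627719597683699595129185689361690471088056345214113905102850406516591833835473557005998685093355228817259370472763252328537223641137816137452132262293676407251650540690943943427661883362438255482577487604895880227538185761380056893024829818557254809599424480413684984376490009504434513058630897484233383966121809772344831998150629557027128044033315189689244587130880) (by decide +kernel)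

theorem u6 : MFN 6 6 := MFN.of_chk 6 6 (tf 5 6 36
  2764648748625742904890478765659863512623776161108178661947717953387874971510622329740692226636276927429480408850523120142114548019020415820741563265274921138090525593556183760120837476072172295253076385608859574182872470526017970857766286058532561668533908855969459463721335448595045435880253103411610147673883044653909669071986957642611680258228967806598536189430586107637452222490045811089372442646536576439786303591726545865058410572715803317942139634235976346901626443317897031157133290050671587302410125646859163086727523237544905729389515158091224423978976278282738726037300155140844394521259034715452419692298665861040663564505319057210138523438588545210455900698616710965207999416045321283029665279181599354376086202375844872501748712785217091543340442436568328217215481262675153843086331539170420130214844998587444894390287035167668174848) (tf 5 6 36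
  1485294498189136162670084366639583502830717604242666553772452506199953953424632521842821929445017127087081932109359263860011044536008951539889914709725592908137196864131653228736389440103013179888655408777165330393379086250432550960340974986361669292659793234661309545534213049531081524433999458999273257677929886062353007474297916377871222401442204816614206761596466229881505823612196808495906890606833689266583647649983401823507252424281051625959527499848881038932911536222435099085181881677546766674517946973343060495226484150180559471300172576071843308856990991460990008732580141037684441849688354049741897402886187686085871230978030229345767333876192973422926732444709781505714340085235001950744030444367009249128481182396052648148288968363496346885389239147322724890811153862329105409923473798617848648643305131569305754479510568785139466240) (by decide +kernel)

theorem u7 : MFN 7 6 := MFN.of_chk 7 6 (tf 7 6 42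
  179976906168000607999624642170669074403912898913698223313097856538773567597524031336815559158232578431687500762930742366876933492459877900182069761855670883868178335386004318411078577610124029344272071287779425381723292709628982580811522602798702155733729913471654310859892425760271523723281561026903497898199989594423827293573096868861884799858584791456211584913649832420117793359804680174554655454369740418577090883615447163613452897683297160248552857483131652942829427586974437374682387354737726957138746399719097715373939621888) (tf 7 6 42
  114356441320131705849334819101977517918060490136115213345352350096334381668704879765376236975301182578128193797329855817557280447037203343870895811817765517736290215624778423581613451149521684651533449281149148063824695919972617434556587592942273128630786438963645302714960337103654992441318141738743825383577283532113569525274652277985202327102625796728518926213517407429847602083996746551127780302559896987797404709979638835401479759879677137778057566116279369582851568653885401942637887325006920153073731596934044024616731541504) (by decide +kernel)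

theorem u2 : MFN 7 2 := MFN.of_chk 7 2 (tf 7 2 14
  8686521087583044372928415575446382476999559315372682330112) (tf 7 2 14
  3935881092182746056800122202711508486655925670748509880320) (by decide +kernel)


def gd {G : Type} [AddCommGroup G] (F S : G → G) (d : G) : Fin 5 → G
  | 0 => F d
  | 1 => d + F (-d)
  | 2 => d + F (-d) - F d
  | 3 => S d
  | 4 => S d - F d

theorem Fr.diff {G : Type} [AddCommGroup G] (D : G → Prop) (F S : G → G) (hD : ∀ d, D d → D (-d))
    (hS : ∀ d, D d → S d = d + S (-d)) (h1 : ∀ k d, D d → D (gd F S d k))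
    (h2 : ∀ k d d', D d → D d' → gd F S d k = gd F S d' k → d = d') :
    Fr (fun x y : G => D (y - x)) := by
  have hsub : ∀ x y k, (FM (fun x y => x + F (y - x)) (fun x y => x + S (y - x)) k x y).2 -
      (FM (fun x y => x + F (y - x)) (fun x y => x + S (y - x)) k x y).1 = gd F S (y - x) k := by
    intro x y k
    have : x - y = -(y - x) := by abel
    fin_cases k <;> simp only [FM, gd, this] <;> abel
  refine ⟨fun x y => x + F (y - x), fun x y => x + S (y - x), ?_, ?_, ?_, ?_⟩
  · intro x y h
    have := hD _ h
    rwa [neg_sub] at this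
  · intro x y h
    have := hS _ h
    rw [neg_sub] at this
    rw [this]; abel
  · intro k x y h
    rw [hsub]
    exact h1 k _ h
  · intro k x y x' y' h h' he
    have e1 : y - x = y' - x' := by
      apply h2 k _ _ h h'
      rw [← hsub, ← hsub, he]
    have e2 : x = x' := by
      have e3 : x - y = x' - y' := by rw [← neg_sub y x, e1, neg_sub]
      have := congrArg Prod.fst he
      fin_cases k <;> simpa [FM, e1] using this
    subst e2
    exact ⟨rfl, sub_left_injective e1⟩

def mc (n N : ℕ) (F S : ℕ → ℕ) (d : ℕ) : ℕ :=
  cond (Nat.beq (Nat.mod d n) 0) 0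
  (force (Nat.sub N d) fun e => force (F d) fun a => force (S d) fun c =>
  force (Nat.mod (Nat.add d (F e)) N) fun b =>
  force (Nat.mod (Nat.add b (Nat.sub N a)) N) fun g => force (Nat.mod (Nat.add c (Nat.sub N a)) N) fun h =>
  cond (and (Nat.ble (Nat.succ a) N) (and (Nat.ble (Nat.succ c) N) (and (Nat.beq c (Nat.mod (Nat.add d (S e)) N))
    (and (not (Nat.beq (Nat.mod a n) 0)) (and (not (Nat.beq (Nat.mod b n) 0)) (and (not (Nat.beq (Nat.mod g n) 0))
     (and (not (Nat.beq (Nat.mod c n) 0)) (not (Nat.beq (Nat.mod h n) 0)))))))))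
  (mk5 d N a b g c h) 4294967296)

theorem mc_eq (n N : ℕ) (F S : ℕ → ℕ) (d : ℕ) (h : d % n ≠ 0) (hm : mc n N F S d ≠ 4294967296) :
    F d < N ∧ S d < N ∧ S d = (d + S (N - d)) % N ∧ ∃ v : Fin 5 → ℕ,
      v 0 = F d ∧ v 1 = (d + F (N - d)) % N ∧ v 2 = ((d + F (N - d)) % N + (N - F d)) % N ∧
      v 3 = S d ∧ v 4 = (S d + (N - F d)) % N ∧ (∀ k, v k % n ≠ 0) ∧
      ∀ k, (mc n N F S d).testBit (32 + (k.val * N + v k + 1)) = true := by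
  unfold mc at hm ⊢
  simp only [force_eq] at hm ⊢
  have e3 : Nat.beq (d.mod n) 0 = false := by
    exact Bool.eq_false_iff.2 fun e => h (Nat.eq_of_beq_eq_true e)
  rw [e3, cond_false] at hm ⊢
  rw [Bool.cond_eq_ite] at hm ⊢
  split_ifs at hm ⊢ with hc
  · simp only [Bool.and_eq_true, Nat.ble_eq, Nat.beq_eq, Bool.not_eq_true', Bool.eq_false_iff, ne_eq] at hc
    refine ⟨hc.1, hc.2.1, hc.2.2.1, _, rfl, rfl, rfl, rfl, rfl, ?_, fun k => mk5_bit _ _ _ _ _ _ _ k⟩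
    intro k
    fin_cases k
    · exact hc.2.2.2.1
    · exact hc.2.2.2.2.1
    · exact hc.2.2.2.2.2.1
    · exact hc.2.2.2.2.2.2.1
    · exact hc.2.2.2.2.2.2.2
  · exact absurd rfl hm

theorem Good.of_cyc (n : ℕ) (hn : 0 < n) (F S : ℕ → ℕ) (h : eng (mc n (3 * n) F S) (3 * n) 4294967296 = true) :
    Good n := by
  have : NeZero (3 * n) := ⟨by omega⟩
  have : NeZero n := ⟨by omega⟩
  have key := fun (d : ZMod (3 * n)) (hd : d.val % n ≠ 0) =>
    mc_eq n (3 * n) F S d.val hd (eng_loc h d.val_lt)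
  let F' : ZMod (3 * n) → ZMod (3 * n) := fun d => (F d.val : ℕ)
  let S' : ZMod (3 * n) → ZMod (3 * n) := fun d => (S d.val : ℕ)
  have hneg : ∀ d : ZMod (3 * n), d.val % n ≠ 0 → (-d).val = 3 * n - d.val := by
    intro d hd
    rw [ZMod.neg_val, if_neg]
    rintro rfl
    simp at hd
  have hmod : ∀ d e : ZMod (3 * n), (e - d).val % n ≠ 0 ↔ d.val % n ≠ e.val % n := by
    intro d e
    have h1 : ∀ x : ZMod (3 * n), ((x.val : ℕ) : ZMod n) = x.cast := fun x => by simp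
    rw [not_iff_not, ← ZMod.natCast_eq_natCast_iff', h1, h1, ← Nat.dvd_iff_mod_eq_zero,
      ← ZMod.natCast_eq_zero_iff, h1, ZMod.cast_sub (Dvd.intro_left 3 rfl), sub_eq_zero, eq_comm]
  have hv : ∀ d : ZMod (3 * n), d.val % n ≠ 0 → ∀ v : Fin 5 → ℕ,
      F d.val < 3 * n → S d.val < 3 * n → 
      v 0 = F d.val → v 1 = (d.val + F (3 * n - d.val)) % (3 * n) →
      v 2 = ((d.val + F (3 * n - d.val)) % (3 * n) + (3 * n - F d.val)) % (3 * n) →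
      v 3 = S d.val → v 4 = (S d.val + (3 * n - F d.val)) % (3 * n) → ∀ k, (gd F' S' d k).val = v k := by
    intro d hd v hF hS v0 v1 v2 v3 v4 k
    have hlt : v k < 3 * n := by
      have := fun z => Nat.mod_lt z (show 3 * n > 0 by omega)
      fin_cases k
      · exact v0 ▸ hF
      · exact v1 ▸ this _
      · exact v2 ▸ this _
      · exact v3 ▸ hS
      · exact v4 ▸ this _
    rw [← ZMod.val_cast_of_lt hlt]
    congr 1
    have hc : ((3 * n - F d.val : ℕ) : ZMod (3 * n)) = - (F d.val : ℕ) := by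
      rw [Nat.cast_sub hF.le, ZMod.natCast_self, zero_sub]
    fin_cases k
    · simp [gd, v0, F']
    · simp [gd, v1, F', hneg d hd]
    · simp only [gd, Fin.reduceFinMk, v2, F', hneg d hd]
      rw [ZMod.natCast_mod, Nat.cast_add, hc, ZMod.natCast_mod]
      simp [sub_eq_add_neg]
    · simp [gd, v3, S']
    · simp only [gd, Fin.reduceFinMk, v4, F', S']
      rw [ZMod.natCast_mod, Nat.cast_add, hc]
      simp [sub_eq_add_neg]
  have H : Fr (fun x y : ZMod (3 * n) => (y - x).val % n ≠ 0) := by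
    refine Fr.diff (fun d : ZMod (3 * n) => d.val % n ≠ 0) F' S' ?_ ?_ ?_ ?_
    · intro d hd
      have := (hmod d 0).2 (by simpa using hd)
      simpa using this
    · intro d hd
      obtain ⟨-, -, h3, -⟩ := key d hd
      have := congrArg (fun z : ℕ => (z : ZMod (3 * n))) h3
      simpa [S', hneg d hd] using this
    · intro k d hd
      obtain ⟨h1, h2, h3, v, v0, v1, v2, v3, v4, h4, h5⟩ := key d hd
      simp only [hv d hd v h1 h2 v0 v1 v2 v3 v4]
      exact h4 k
    · intro k d d' hd hd' he
      obtain ⟨h1, h2, h3, v, v0, v1, v2, v3, v4, h4, h5⟩ := key d hd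
      obtain ⟨h1', h2', h3', v', v0', v1', v2', v3', v4', h4', h5'⟩ := key d' hd'
      have e : v k = v' k := by
        rw [← hv d hd v h1 h2 v0 v1 v2 v3 v4, ← hv d' hd' v' h1' h2' v0' v1' v2' v3' v4', he]
      have h5 := h5 k
      rw [e] at h5
      exact ZMod.val_injective _ (eng_bit h d.val_lt d'.val_lt h5 (h5' k))
  let e : ZMod (3 * n) ≃ Fin (3 * n) :=
    { toFun := fun x => ⟨x.val, x.val_lt⟩
      invFun := fun i => (i.val : ℕ)
      left_inv := fun x => by simp
      right_inv := fun i => by apply Fin.ext; simp [ZMod.val_cast_of_lt i.2] }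
  refine Fr.equiv (e.trans (finProdFinEquiv.symm.trans (Equiv.prodComm _ _))) ?_ H
  intro a b
  have : ∀ a, ((e.trans (finProdFinEquiv.symm.trans (Equiv.prodComm _ _))) a).1.val = a.val % n := fun a => rfl
  rw [hmod, ne_eq, ← Fin.val_inj, this, this]

def ct (T d : ℕ) : ℕ := Nat.mod (Nat.shiftRight T (Nat.mul 8 d)) 256


theorem c5 : Good 5 := Good.of_cyc 5 (by norm_num) (ct
  67784131974477380251149795102032640) (ct
  31195220265625701833693762739767040) (by decide +kernel)

theorem c7 : Good 7 := Good.of_cyc 7 (by norm_num) (ct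
  5960476451390450957957971237904576255502707986944) (ct
  13239506498641566666595158563093873744273455778304) (by decide +kernel)

theorem c11 : Good 11 := Good.of_cyc 11 (by norm_num) (ct
  3256654311238728848357786439427592260793321857172163522036021871611123900679680) (ct
  1742316250369114899840134205418035108770185068391120473530381052614307270758400) (by decide +kernel)

theorem c13 : Good 13 := Good.of_cyc 13 (by norm_num) (ct
  229689760651492769968004002384481947406241857293697961917507792921630369888469922897739718912) (ct
  586809131875155388116089103138816476506306865142406151805039152663942185675375172989453800192) (by decide +kernel)

theorem c17 : Good 17 := Good.of_cyc 17 (by norm_num) (ct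
  111370009864429230696550964640463289542540682109934651385538830255293499707457515325524274738613263052615432173092271556864) (ct
  61985706417136280309888291576764699719400812292847981610788331590867655955496531881251890650735518904533440267541845055744) (by decide +kernel)

theorem c19 : Good 19 := Good.of_cyc 19 (by norm_num) (ct
  7319971727278727889620304514873624010090297397784842345992398335165948257599010661080480170349327542790126667417030630711507700853059584) (ct
  19627997150804677716431360794397259090430897718171246658078096516914964268193590799721614937289672260018935397229329142054381555986668544) (by decide +kernel)

theorem c23 : Good 23 := Good.of_cyc 23 (by norm_num) (ct
  3350122393898511692393373850675294734899599808108724106207393474604890276386788150662245537170879684483379794830838479050208248356356325935777941981902367200231427072) (ct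
  1900575136184053440374005694322176088101082578388295838455737339778344560577340551342062149930547516354251115903907270775535858035441273653679276312881985488442040832) (by decide +kernel)

theorem c29 : Good 29 := Good.of_cyc 29 (by norm_num) (ct
  94179270425971675647554004543570943899182695568198051253799521477336905013151161248781022131562410517253636278441345285271257026962780425200439986178365367748704214677256488052153900710633376616700018818027264) (ct
  54068765762861060176064360042668335083650837928217877141219642353639450929036562675902415399889720405956784756684549153258590508496389077974616460749267011176770398118183487775235277052109405505392113992084224) (by decide +kernel)

theorem c31 : Good 31 := Good.of_cyc 31 (by norm_num) (ct
  5826344824666690633976377499879325508810424347278137760696140015620742904610398423526424207805894308786555306152602614928087913036284614992739262827617710654335044774047630901794314656467576118702711851649519934048053317120) (ct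
  16268153477314021211433655044390291286426298143944891947541749013518428251180474041992323366082974316495019850872908328013395819077178823557307602875574585835072763489921159296150364756875496127390445739058941570448963612160) (by decide +kernel)

theorem c37 : Good 37 := Good.of_cyc 37 (by norm_num) (ct
  154306019502492196436602330691039701288490436648516259517372550750042583584350125430574923046200370819806275399208060317223905569925157311305829637295193117037469281453035264624238530366435122349011293995276000179690933747939140580475140659710343462827301218793643264) (ct
  435344012582116461872916364083319274411040713272876917186319535146445969990990353579247673985692066696070968084502510487160262744704231465762526659080616006107370653575884171779946482917676259210134478449956533140510317721759193003535479489967986249073774747908781824) (by decide +kernel)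

theorem c41 : Good 41 := Good.of_cyc 41 (by norm_num) (ct
  65985191470147464276823133978401087739232477100001877174671302492611672108894196435764326437468559318381434557698838317212824328240109176378666239770567625753929782733679036178552147521971069485779503360109972045243403130257207472300863037242922894931750600561078165885647670233480711692979016960) (ct
  38323617483620831334458698012890772536675239899935750954460552913005850357053027833246387809809056941987980879434838318568041095466323157618156424754057193104375483681258576159122403596834944127728896050623321782291801910606885755611302509348759026166163851241957353077667004330222065492873657600) (by decide +kernel)

theorem c43 : Good 43 := Good.of_cyc 43 (by norm_num) (ct
  4045092948651326570268690869441716821673042342802420339806293423695670181958968924434369032631348441616475721116723139009808643793408096588675382864261078857247882914926882521374920136670640475693260902444149611005800226572345718943922377053741721770811949896697308029953546096937422977555518042411968658762752) (ct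
  11384043039849273081750621207372250900276130544031714826116214407332603228611330418519920370694882958418785428718594021507366361819804727507994046548962609408074271113109986443245817344137133948011017814125530200363090879372728522978542951037696714147525369533622792035980992343722699641517468422555477132787712) (by decide +kernel)

theorem c47 : Good 47 := Good.of_cyc 47 (by norm_num) (ct
  1685827811624916084223189982845147761139167306813571650241630205532632791438034927654269474483920177689890573301121594730286885375812191636419976834529275692854629754349203072451519659634344883095749125717399917380555558079768599092881837900562292965917485611982081180990142015365554832199457624429899495545677264847296014055977817857726464) (ct
  982813206461243448585269705424012965023671539699066704740897366996148895111951378655508837714891443279492752995562861742089578063013477685536116311120522790692091776054763519785851232607461261497986919653158479794948881068048864190163051387968279631369233882069603778872534145218493605445544826002510229371572792368337077843329599643272704) (by decide +kernel)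

theorem c53 : Good 53 := Good.of_cyc 53 (by norm_num) (ct
  42440280413757696580318194236933250529403282790288530467760465694241964409671555463886675929422285595388999748823711214685341591975426559217262455326274873656325185957151360942466745132023541086428724932538579041965066417703962205268222463389838595995647774606751241778361693752690598346513732200404095262502860577670645164878988561939891903173341324138004508796620231702099082615552) (ct
  24837414858707442309430487502930544080036317794206861867969271973469661259898802205652839855453000019987878039258580787927911829238304170837648248130963191367823429733650074945959713007623176628837715289799472224897876235309404385947519510836662103749506385374143693169410746383815403945649155443725246714805589222000067657676390476467449043685898648687707589306812297910204140637952) (by decide +kernel)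

theorem c67 : Good 67 := Good.of_cyc 67 (by norm_num) (ct
  1523296074558096009191835693383204992034932114368982908747879573153558959191156149791164104367097177129731112116632799887222337213861223656531350229824735474787096368916891482189704133918568500465661281504644231071821869990681522919728439725031710612936664167591436056415603043862957007769043557237232071504735400414953332177315692976813213420663613078025156942536954611810065217120362455605031348779224071496615363756061332681075025253983552110075327321432711159462473602772737828864) (ct
  4402066051078191923488883745378196316875855352363049106918122755920718380825731181537300654154233331932918059486248525336061517586753813347866154292911981169418110139887289054837218224321179517615409007272906744769282302165113637833246207324104553709455478046663425199420441485560697449930426755227224733224398290117451172346541676347927454250544328609484641703727571642418876368502302077623914109250104538126411505514501451231227601914414464839961864928117743675613438474111173223424) (by decide +kernel)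

theorem c73 : Good 73 := Good.of_cyc 73 (by norm_num) (ct
  36968830472823965497289057623185278021009321463110795743766216526049727104147323168806330446853417813254112574518763095477314018306356432337211427686389382557515905659667925172476009135883193587938040984028864132199287921157312642000811617638737130381044880811293968455962822572856606776527092955926878440339348413267907514474020210549441312457020397457640662623645109583093779862930715519872117672191450944354609200503540822644330805585667204652921492243353707690669360054733942085323044675270218977395439341764059828451391232) (ct
  107091277622136433579881642225877261551301511845642517981278049190943477646394642822800357252351276929296520130976722419263362723628208124192362729012574215870454545154624900187343364250495586197602651225106337557120339479564590120009692820432905514349651059265712419716276818985404003638739199119578829306610152093575095692039374833422271988894177573669821857235098037914537020773578315248454463343520343427605436587154672241999030173504548323893056275713654631370626170043323835311108672611361094012466306840749064425581014272) (by decide +kernel)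


theorem punct {F K W : Type} [Field F] (α β : K → F)
    (hdet : ∀ i j, i ≠ j → α i * β j - α j * β i ≠ 0)
    (hb : ∀ u : F × F, u ≠ 0 → MFr {i // α i * u.1 + β i * u.2 ≠ 0} W) :
    Fr (fun x y : (K × Fˣ) × W => x.1.1 ≠ y.1.1) := by
  refine Fr.gdd (P := K × Fˣ) (γ := Prod.fst) (B := {u : F × F // u ≠ 0})
    (g := fun u y => (y.1, Units.mk0 _ y.2)) ?_ ?_ ?_ (fun u => hb u.1 u.2)
  · intro b y z h
    exact Subtype.ext h
  · rintro ⟨i, u⟩ ⟨j, v⟩ hij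
    have hD := hdet i j hij
    obtain ⟨D, hD'⟩ : ∃ D, D * (α i * β j - α j * β i) = 1 := ⟨_, inv_mul_cancel₀ hD⟩
    have e1 : α i * (D * (β j * u - β i * v)) + β i * (D * (α i * v - α j * u)) = u := by
      linear_combination (u : F) * hD'
    have e2 : α j * (D * (β j * u - β i * v)) + β j * (D * (α i * v - α j * u)) = v := by
      linear_combination (v : F) * hD'
    refine ⟨⟨(D * (β j * u - β i * v), D * (α i * v - α j * u)), ?_⟩, ⟨i, by rw [e1]; exact u.ne_zero⟩,
      ⟨j, by rw [e2]; exact v.ne_zero⟩, ?_, ?_⟩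
    · intro h
      rw [Prod.mk_eq_zero] at h
      rw [h.1, h.2] at e1
      exact u.ne_zero (by rw [← e1]; ring)
    · exact Prod.ext rfl (Units.ext e1)
    · exact Prod.ext rfl (Units.ext e2)
  · rintro ⟨⟨a, b⟩, hu⟩ ⟨⟨a', b'⟩, hu'⟩ ⟨i, hi⟩ ⟨j, hj⟩ ⟨i', hi'⟩ ⟨j', hj'⟩ hij e1 e2
    simp only [Prod.mk.injEq] at e1 e2 hij
    obtain ⟨rfl, h2⟩ := e1
    obtain ⟨rfl, h4⟩ := e2
    have h2 := congrArg Units.val h2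
    have h4 := congrArg Units.val h4
    simp only [Units.val_mk0] at h2 h4
    have hD := hdet i j hij
    obtain ⟨D, hD'⟩ : ∃ D, D * (α i * β j - α j * β i) = 1 := ⟨_, inv_mul_cancel₀ hD⟩
    apply Subtype.ext
    ext
    · simp only
      linear_combination (a' - a) * hD' + D * (β j * h2 - β i * h4)
    · simp only
      linear_combination (b' - b) * hD' + D * (α i * h4 - α j * h2)

instance fact7 : Fact (Nat.Prime 7) := ⟨by norm_num⟩

def al (i : Option (ZMod 7)) : ZMod 7 := match i with
  | none => 0
  | some _ => 1
def be (i : Option (ZMod 7)) : ZMod 7 := match i with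
  | none => 1
  | some m => m

theorem good33 (M2 : MFN 7 2) (h5 : Good 5) : Good 33 := by
  have F := punct (W := Fin 2) al be (by
    rintro (_ | i) (_ | j) hij
    · exact absurd rfl hij
    · simp [al, be]
    · simp [al, be]
    · simp only [al, be]
      intro h
      exact hij (congrArg some (by linear_combination -h))) (by
    intro u hu
    refine M2.mfr ?_ (by simp)
    have : ∀ a b : ZMod 7, (a ≠ 0 ∨ b ≠ 0) → (Finset.univ.filter fun i => al i * a + be i * b ≠ 0).card = 7 := by
      decide +kernel
    have h := this u.1 u.2 (by
      by_contra h
      push Not at h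
      exact hu (Prod.ext h.1 h.2))
    rw [Fintype.card_subtype]
    convert h)
  have hU : Fintype.card ((ZMod 7)ˣ × Fin 2) = Fintype.card (Fin 4 × Fin 3) := by
    rw [Fintype.card_prod, ZMod.card_units]
    simp
  have e := Fintype.equivOfCardEq hU
  have F2 : Fr (fun x y : (Option (ZMod 7) × Fin 4) × Fin 3 => x.1.1 ≠ y.1.1) := by
    refine Fr.equiv ((Equiv.prodAssoc _ _ _).trans (((Equiv.refl _).prodCongr e).trans (Equiv.prodAssoc _ _ _).symm)) ?_ F
    intro a b
    rfl
  have F3 := Fr.fill1 (fun y : Option (ZMod 7) × Fin 4 => y.1) F2 (by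
    intro c
    refine h5.mfr ?_ (by simp)
    rw [Fintype.card_option]
    have e : {y : Option (ZMod 7) × Fin 4 // y.1 = c} ≃ Fin 4 :=
      { toFun := fun y => y.1.2
        invFun := fun y => ⟨(c, y), rfl⟩
        left_inv := by rintro ⟨⟨i, x⟩, h⟩; simp only at h; subst h; rfl
        right_inv := by intro x; rfl }
    rw [Fintype.card_congr e]
    simp)
  refine F3.mfn ?_ (by simp)
  simp [ZMod.card]

def kk (i : Fin 4) : ZMod 7 := (i.val + 1 : ℕ)
theorem kk_inj : Function.Injective kk := by decide
abbrev P69 := (Fin 4 × ZMod 7) ⊕ (ZMod 7)ˣ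
def ga69 : P69 → Option (ZMod 7)
  | Sum.inl p => some p.2
  | Sum.inr _ => none
def Y69 : ((ZMod 7)ˣ × ZMod 7) ⊕ Fin 4 → Type
  | Sum.inl _ => Option (Fin 4)
  | Sum.inr _ => ZMod 7
def g69 : ∀ b, Y69 b → P69
  | Sum.inl b => fun o => match (o : Option (Fin 4)) with
    | none => Sum.inr b.1
    | some i => Sum.inl (i, b.1 * kk i + b.2)
  | Sum.inr i => fun y => Sum.inl (i, y)

theorem good69 (M5 : MFN 5 6) (M7 : MFN 7 6) (h9 : Good 9) (h13 : Good 13) : Good 69 := by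
  have F : Fr (fun x y : P69 × (Fin 2 × Fin 3) => ga69 x.1 ≠ ga69 y.1) := by
    refine Fr.gdd ga69 g69 ?_ ?_ ?_ ?_
    · rintro (⟨a, b⟩ | i)
      · rintro (_ | i) (_ | j) h
        · rfl
        · simp [g69, ga69] at h
        · simp [g69, ga69] at h
        · simp only [g69, ga69, Option.some.injEq, add_left_inj, Units.mul_right_inj] at h
          rw [kk_inj h]
      · intro y z h
        exact Option.some.inj h
    · have aux : ∀ (i : Fin 4) (y : ZMod 7) (a : (ZMod 7)ˣ), ∃ b u v, g69 b u = Sum.inl (i, y) ∧ g69 b v = Sum.inr a :=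
        fun i y a => ⟨Sum.inl (a, y - a * kk i), some i, none, by simp [g69], rfl⟩
      rintro (⟨i, y⟩ | a) (⟨j, z⟩ | a') h
      · have hyz : y ≠ z := fun e => h (by simp [ga69, e])
        by_cases hij : i = j
        · subst hij
          exact ⟨Sum.inr i, y, z, rfl, rfl⟩
        · have hk : kk i - kk j ≠ 0 := sub_ne_zero.2 fun e => hij (kk_inj e)
          obtain ⟨a, ha⟩ : ∃ a : (ZMod 7)ˣ, (a : ZMod 7) * (kk i - kk j) = y - z :=
            ⟨Units.mk0 ((y - z) / (kk i - kk j)) (div_ne_zero (sub_ne_zero.2 hyz) hk), by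
              simp only [Units.val_mk0]; exact div_mul_cancel₀ _ hk⟩
          refine ⟨Sum.inl (a, y - a * kk i), some i, some j, ?_, ?_⟩
          · simp [g69]
          · simp only [g69]
            congr 2
            linear_combination -ha
      · exact aux i y a'
      · obtain ⟨b, u, v, h1, h2⟩ := aux j z a
        exact ⟨b, v, u, h2, h1⟩
      · exact absurd rfl h
    · rintro (⟨a, b⟩ | i) (⟨a', b'⟩ | i') y z y' z' hyz e1 e2
      · have hh : ∀ (y y' : Option (Fin 4)), g69 (Sum.inl (a, b)) y = g69 (Sum.inl (a', b')) y' →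
            y = y' ∧ (y = none → a = a') ∧ ∀ i, y = some i → (a : ZMod 7) * kk i + b = a' * kk i + b' := by
          rintro (_ | i) (_ | i') h
          · simp only [g69, Sum.inr.injEq] at h
            exact ⟨rfl, fun _ => h, fun i h => by simp at h⟩
          · simp [g69] at h
          · simp [g69] at h
          · simp only [g69, Sum.inl.injEq, Prod.mk.injEq] at h
            obtain ⟨rfl, h⟩ := h
            refine ⟨rfl, fun h => by simp at h, fun j hj => ?_⟩
            rw [← Option.some.inj hj]
            exact h
        obtain ⟨-, p1, p2⟩ := hh y y' e1
        obtain ⟨-, q1, q2⟩ := hh z z' e2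
        have hne : y ≠ z := fun e => hyz (by rw [e])
        have fin1 : ∀ i, a = a' → (a : ZMod 7) * kk i + b = a' * kk i + b' → b = b' := by
          rintro i rfl h
          exact add_left_cancel h
        have : a = a' ∧ b = b' := by
          change Option (Fin 4) at y z
          rcases y with _ | i <;> rcases z with _ | j
          · exact absurd rfl hne
          · exact ⟨p1 rfl, fin1 j (p1 rfl) (q2 j rfl)⟩
          · exact ⟨q1 rfl, fin1 i (q1 rfl) (p2 i rfl)⟩
          · have hk : kk i - kk j ≠ 0 := sub_ne_zero.2 fun e => hne (by rw [kk_inj e])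
            have ha : a = a' := by
              apply Units.ext
              apply mul_right_cancel₀ hk
              linear_combination p2 i rfl - q2 j rfl
            exact ⟨ha, fin1 i ha (p2 i rfl)⟩
        rw [this.1, this.2]
      · exfalso
        change Option (Fin 4) at y z
        rcases y with _ | i <;> rcases z with _ | j <;> simp [g69] at e1 e2
        have h1 := congrArg Prod.fst e1
        have h2 := congrArg Prod.fst e2
        simp only at h1 h2
        exact hyz (by rw [h1, h2])
      · exfalso
        change Option (Fin 4) at y' z'
        rcases y' with _ | i <;> rcases z' with _ | j <;> simp [g69] at e1 e2
        have h1 := congrArg Prod.fst e1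
        have h2 := congrArg Prod.fst e2
        simp only at h1 h2
        have h3 : y = ((a' : ZMod 7) * kk i + b' : ZMod 7) := congrArg Prod.snd e1
        have h4 : z = ((a' : ZMod 7) * kk j + b' : ZMod 7) := congrArg Prod.snd e2
        exact hyz (by rw [h3, h4, ← h1, ← h2])
      · simp only [g69, Sum.inl.injEq] at e1
        have e1 : i = i' := congrArg Prod.fst e1
        rw [e1]
    · rintro (b | i)
      · exact M5.mfr (K := Option (Fin 4)) (by simp) (by simp)
      · exact M7.mfr (K := ZMod 7) (by simp [ZMod.card]) (by simp)
  have F2 : Fr (fun x y : (P69 × Fin 2) × Fin 3 => ga69 x.1.1 ≠ ga69 y.1.1) :=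
    Fr.equiv (Equiv.prodAssoc _ _ _).symm (fun a b => Iff.rfl) F
  have F3 := Fr.fill1 (fun y : P69 × Fin 2 => ga69 y.1) F2 (by
    rintro (_ | c)
    · refine h13.mfr ?_ (by simp)
      rw [Fintype.card_option]
      have e : {y : P69 × Fin 2 // ga69 y.1 = none} ≃ (ZMod 7)ˣ × Fin 2 :=
        { toFun := fun y => (match y.1.1, y.2 with | Sum.inr a, _ => a, y.1.2)
          invFun := fun y => ⟨(Sum.inr y.1, y.2), rfl⟩
          left_inv := by rintro ⟨⟨x | x, j⟩, h⟩
                         · simp [ga69] at h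
                         · rfl
          right_inv := by rintro ⟨x, j⟩; rfl }
      rw [Fintype.card_congr e, Fintype.card_prod, ZMod.card_units]
      simp
    · refine h9.mfr ?_ (by simp)
      rw [Fintype.card_option]
      have e : {y : P69 × Fin 2 // ga69 y.1 = some c} ≃ Fin 4 × Fin 2 :=
        { toFun := fun y => (match y.1.1, y.2 with | Sum.inl a, _ => a.1, y.1.2)
          invFun := fun y => ⟨(Sum.inl (y.1, c), y.2), rfl⟩
          left_inv := by rintro ⟨⟨⟨i, x⟩ | x, j⟩, h⟩
                         · simp only [ga69, Option.some.injEq] at h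
                           subst h
                           rfl
                         · simp [ga69] at h
          right_inv := by rintro ⟨x, j⟩; rfl }
      rw [Fintype.card_congr e]
      simp)
  refine F3.mfn ?_ (by simp)
  rw [Fintype.card_option, Fintype.card_prod, Fintype.card_sum, ZMod.card_units]
  simp [ZMod.card]


theorem cov : ∀ N < 157, 2 ≤ N → N ∈ [2, 3, 4, 5, 6, 7, 8, 9, 10, 11, 12, 13, 14, 15, 16, 17, 18, 19, 20, 21, 22, 23, 24, 26, 31, 32, 33, 34, 36, 43, 44, 45, 46, 47, 48, 49, 50, 51, 52, 53, 54, 56, 79, 80, 81, 82, 83, 84, 86, 116] ∨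
    ∃ g < 32, Nat.Coprime g 6 ∧ 2 ≤ g ∧ 5 * g ≤ N ∧ N ≤ 6 * g ∧ N ≠ 5 * g + 1 := by
  decide +kernel

theorem good_all (N : ℕ) : N ≠ 1 → Good (2 * N + 1) := by
  induction N using Nat.strong_induction_on with
  | _ N ih =>
  intro h1
  rcases Nat.eq_zero_or_pos N with rfl | h0
  · exact good_one
  have six : ∀ g, Nat.Coprime g 6 → 2 ≤ g → 5 * g ≤ N → N ≤ 6 * g → N ≠ 5 * g + 1 → Good (2 * N + 1) := by
    intro g hg h2 h3 h4 h5
    have := recZ6 u5 u6 u7 g (N - 5 * g) hg (by omega) (by omega) (ih g (by omega) (by omega))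
      (ih (N - 5 * g) (by omega) (by omega))
    rwa [Nat.add_sub_cancel' h3] at this
  rcases Nat.lt_or_ge N 157 with hN | hN
  · rcases cov N hN (by omega) with hL | ⟨g, -, h2, h3, h4, h5, h6⟩
    · simp only [List.mem_cons, List.not_mem_nil, or_false] at hL
      rcases hL with rfl | rfl | rfl | rfl | rfl | rfl | rfl | rfl | rfl | rfl | rfl | rfl | rfl | rfl | rfl | rfl | rfl | rfl | rfl | rfl | rfl | rfl | rfl | rfl | rfl | rfl | rfl | rfl | rfl | rfl | rfl | rfl | rfl | rfl | rfl | rfl | rfl | rfl | rfl | rfl | rfl | rfl | rfl | rfl | rfl | rfl | rfl | rfl | rfl | rfl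
      · exact c5
      · exact c7
      · exact t9
      · exact c11
      · exact c13
      · exact t15
      · exact c17
      · exact c19
      · exact t21
      · exact c23
      · exact rec3Z 5 (by decide) (by decide) c5 c5
      · exact t27
      · exact c29
      · exact c31
      · exact good33 u2 c5
      · exact rec3Z 7 (by decide) (by decide) c5 c7
      · exact c37
      · exact t39
      · exact c41
      · exact c43
      · exact rec3F 5 (by decide) c5 t9
      · exact c47
      · exact rec3Z7 7 (by decide) (by decide) c7 c7
      · exact c53
      · exact rec3F 7 (by decide) c7 t9
      · exact rec3Z 13 (by decide) (by decide) c5 c13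
      · exact c67
      · exact good69 u5 u7 t9 c13
      · exact c73
      · exact recZ7 u5 u6 u7 7 2 6 (by decide) (by decide) (by decide) (by decide)
          (ih 7 (by decide) (by decide)) (ih 2 (by decide) (by decide)) (ih 6 (by decide) (by decide))
      · exact recZ7 u5 u6 u7 7 2 7 (by decide) (by decide) (by decide) (by decide)
          (ih 7 (by decide) (by decide)) (ih 2 (by decide) (by decide)) (ih 7 (by decide) (by decide))
      · exact recZ7 u5 u6 u7 7 3 7 (by decide) (by decide) (by decide) (by decide)
          (ih 7 (by decide) (by decide)) (ih 3 (by decide) (by decide)) (ih 7 (by decide) (by decide))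
      · exact recZ7 u5 u6 u7 7 4 7 (by decide) (by decide) (by decide) (by decide)
          (ih 7 (by decide) (by decide)) (ih 4 (by decide) (by decide)) (ih 7 (by decide) (by decide))
      · exact recZ7 u5 u6 u7 7 5 7 (by decide) (by decide) (by decide) (by decide)
          (ih 7 (by decide) (by decide)) (ih 5 (by decide) (by decide)) (ih 7 (by decide) (by decide))
      · exact recZ7 u5 u6 u7 7 6 7 (by decide) (by decide) (by decide) (by decide)
          (ih 7 (by decide) (by decide)) (ih 6 (by decide) (by decide)) (ih 7 (by decide) (by decide))
      · exact recZ7 u5 u6 u7 7 7 7 (by decide) (by decide) (by decide) (by decide)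
          (ih 7 (by decide) (by decide)) (ih 7 (by decide) (by decide)) (ih 7 (by decide) (by decide))
      · exact rec9 u5 u6 u7 5 0 (by decide) (by decide) c19
          (ih 5 (by decide) (by decide)) (ih 0 (by decide) (by decide))
      · exact rec9 u5 u6 u7 6 0 (by decide) (by decide) c19
          (ih 6 (by decide) (by decide)) (ih 0 (by decide) (by decide))
      · exact rec9 u5 u6 u7 7 0 (by decide) (by decide) c19
          (ih 7 (by decide) (by decide)) (ih 0 (by decide) (by decide))
      · exact rec9 u5 u6 u7 8 0 (by decide) (by decide) c19
          (ih 8 (by decide) (by decide)) (ih 0 (by decide) (by decide))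
      · exact rec9 u5 u6 u7 9 0 (by decide) (by decide) c19
          (ih 9 (by decide) (by decide)) (ih 0 (by decide) (by decide))
      · exact rec9 u5 u6 u7 2 9 (by decide) (by decide) c19
          (ih 2 (by decide) (by decide)) (ih 9 (by decide) (by decide))
      · exact recZ7 u5 u6 u7 13 2 12 (by decide) (by decide) (by decide) (by decide)
          (ih 13 (by decide) (by decide)) (ih 2 (by decide) (by decide)) (ih 12 (by decide) (by decide))
      · exact recZ7 u5 u6 u7 13 2 13 (by decide) (by decide) (by decide) (by decide)
          (ih 13 (by decide) (by decide)) (ih 2 (by decide) (by decide)) (ih 13 (by decide) (by decide))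
      · exact recZ7 u5 u6 u7 13 3 13 (by decide) (by decide) (by decide) (by decide)
          (ih 13 (by decide) (by decide)) (ih 3 (by decide) (by decide)) (ih 13 (by decide) (by decide))
      · exact recZ7 u5 u6 u7 13 4 13 (by decide) (by decide) (by decide) (by decide)
          (ih 13 (by decide) (by decide)) (ih 4 (by decide) (by decide)) (ih 13 (by decide) (by decide))
      · exact recZ7 u5 u6 u7 13 5 13 (by decide) (by decide) (by decide) (by decide)
          (ih 13 (by decide) (by decide)) (ih 5 (by decide) (by decide)) (ih 13 (by decide) (by decide))
      · exact recZ7 u5 u6 u7 13 6 13 (by decide) (by decide) (by decide) (by decide)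
          (ih 13 (by decide) (by decide)) (ih 6 (by decide) (by decide)) (ih 13 (by decide) (by decide))
      · exact recZ7 u5 u6 u7 13 8 13 (by decide) (by decide) (by decide) (by decide)
          (ih 13 (by decide) (by decide)) (ih 8 (by decide) (by decide)) (ih 13 (by decide) (by decide))
      · exact recZ7 u5 u6 u7 17 14 17 (by decide) (by decide) (by decide) (by decide)
          (ih 17 (by decide) (by decide)) (ih 14 (by decide) (by decide)) (ih 17 (by decide) (by decide))
    · exact six g h2 h3 h4 h5 h6
  · have hk : Nat.Coprime (6 * ((N - 7) / 30) + 1) 6 := by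
      rw [Nat.coprime_comm, Nat.coprime_mul_left_add_right]
      exact Nat.coprime_one_right 6
    exact six _ hk (by omega) (by omega) (by omega) (by omega)


section fin
variable {n : ℕ}

abbrev XX (n : ℕ) := Fin n × Fin 3
abbrev II (n : ℕ) := {p : XX n × XX n // p.1.1 < p.2.1} ⊕ (Fin n × Fin 4)

theorem cnt_frame (Φ : XX n → XX n → XX n × XX n)
    (hm : ∀ x y : XX n, x.1 ≠ y.1 → (Φ x y).1.1 ≠ (Φ x y).2.1)
    (hi : ∀ x y x' y' : XX n, x.1 ≠ y.1 → x'.1 ≠ y'.1 → Φ x y = Φ x' y' → x = x' ∧ y = y') (u v : XX n) :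
    (Finset.univ.filter fun p : {p : XX n × XX n // p.1.1 < p.2.1} =>
      Φ p.1.1 p.1.2 = (u, v) ∨ Φ p.1.2 p.1.1 = (u, v)).card = if u.1 ≠ v.1 then 1 else 0 := by
  split_ifs with h
  · let g : {p : XX n × XX n // p.1.1 ≠ p.2.1} → {p : XX n × XX n // p.1.1 ≠ p.2.1} :=
      fun p => ⟨Φ p.1.1 p.1.2, hm _ _ p.2⟩
    have hg : Function.Injective g := by
      rintro ⟨⟨x, y⟩, h⟩ ⟨⟨x', y'⟩, h'⟩ e
      have := hi x y x' y' h h' (congrArg Subtype.val e)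
      simp [this]
    obtain ⟨⟨⟨x, y⟩, hxy⟩, he⟩ := Finite.surjective_of_injective hg ⟨(u, v), h⟩
    have he : Φ x y = (u, v) := congrArg Subtype.val he
    rw [Finset.card_eq_one]
    rcases lt_or_gt_of_ne hxy with hl | hl
    · refine ⟨⟨(x, y), hl⟩, ?_⟩
      ext ⟨⟨x', y'⟩, hl'⟩
      simp only [Finset.mem_filter, Finset.mem_univ, true_and, Finset.mem_singleton, Subtype.mk.injEq, Prod.mk.injEq]
      constructor
      · rintro (h1 | h1)
        · exact hi _ _ _ _ (ne_of_lt hl') hxy (h1.trans he.symm)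
        · have := hi _ _ _ _ (ne_of_gt hl') hxy (h1.trans he.symm)
          rw [this.1, this.2] at hl'
          exact absurd hl (lt_asymm hl')
      · rintro ⟨rfl, rfl⟩
        exact Or.inl he
    · refine ⟨⟨(y, x), hl⟩, ?_⟩
      ext ⟨⟨x', y'⟩, hl'⟩
      simp only [Finset.mem_filter, Finset.mem_univ, true_and, Finset.mem_singleton, Subtype.mk.injEq, Prod.mk.injEq]
      constructor
      · rintro (h1 | h1)
        · have := hi _ _ _ _ (ne_of_lt hl') hxy (h1.trans he.symm)
          rw [this.1, this.2] at hl'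
          exact absurd hl (lt_asymm hl')
        · exact (hi _ _ _ _ (ne_of_gt hl') hxy (h1.trans he.symm)).symm
      · rintro ⟨rfl, rfl⟩
        exact Or.inr he
  · rw [Finset.card_eq_zero, Finset.filter_eq_empty_iff]
    rintro ⟨⟨x, y⟩, hl⟩ -
    rintro (h1 | h1)
    · have := hm x y (ne_of_lt hl)
      simp only at h1
      rw [h1] at this
      exact h this
    · have := hm y x (ne_of_gt hl)
      simp only at h1
      rw [h1] at this
      exact h this

theorem cnt_all (Φ : XX n → XX n → XX n × XX n)
    (hm : ∀ x y : XX n, x.1 ≠ y.1 → (Φ x y).1.1 ≠ (Φ x y).2.1)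
    (hi : ∀ x y x' y' : XX n, x.1 ≠ y.1 → x'.1 ≠ y'.1 → Φ x y = Φ x' y' → x = x' ∧ y = y') (u v : XX n)
    (Q : II n → Prop) {dQ : DecidablePred Q} (q : Fin 4 → Prop) [DecidablePred q]
    (hQ1 : ∀ p, Q (Sum.inl p) ↔ Φ p.1.1 p.1.2 = (u, v) ∨ Φ p.1.2 p.1.1 = (u, v))
    (hQ2 : ∀ h j, Q (Sum.inr (h, j)) ↔ h = u.1 ∧ h = v.1 ∧ q j) :
    (Finset.univ.filter Q).card = if u.1 ≠ v.1 then 1 else (Finset.univ.filter q).card := by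
  have h1 : (Finset.univ.filter Q).card = (Finset.univ.filter fun p => Q (Sum.inl p)).card +
      (Finset.univ.filter fun p => Q (Sum.inr p)).card := by
    simp only [Finset.card_filter, Fintype.sum_sum_type]
  have h2 : (Finset.univ.filter fun p => Q (Sum.inl p)).card = if u.1 ≠ v.1 then 1 else 0 := by
    rw [← cnt_frame Φ hm hi u v]
    congr 1
    ext p
    simp only [Finset.mem_filter, hQ1]
  have h3 : (Finset.univ.filter fun p => Q (Sum.inr p)).card = if u.1 ≠ v.1 then 0 else (Finset.univ.filter q).card := by
    split_ifs with h
    · rw [Finset.card_eq_zero, Finset.filter_eq_empty_iff]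
      rintro ⟨x, j⟩ -
      rw [hQ2]
      rintro ⟨rfl, h', -⟩
      exact h h'
    · push Not at h
      symm
      apply Finset.card_bij (fun j _ => (u.1, j))
      · intro j hj
        simpa [hQ2, ← h] using hj
      · intro a _ b _ h
        simpa using h
      · rintro ⟨x, j⟩ hx
        simp only [Finset.mem_filter, Finset.mem_univ, true_and, hQ2] at hx
        exact ⟨j, by simpa using hx.2.2, by rw [hx.1]⟩
  rw [h1, h2, h3]
  split_ifs <;> simp

end fin


section fin2
variable {n : ℕ}

def mA : Fin 4 → Fin 3 := ![0, 0, 1, 1]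
def wA : Fin 4 → Fin 3 := ![1, 2, 0, 1]
def mB : Fin 4 → Fin 3 := ![1, 2, 2, 2]
def wB : Fin 4 → Fin 3 := ![2, 1, 2, 0]
def rj : Fin 4 → Option (Fin 3) := ![some 0, some 1, some 2, none]

def tA (f : XX n → XX n → XX n) : II n → XX n × XX n
  | Sum.inl p => (p.1.1, f p.1.1 p.1.2)
  | Sum.inr p => ((p.1, mA p.2), (p.1, wA p.2))
def tB (f : XX n → XX n → XX n) : II n → XX n × XX n
  | Sum.inl p => (p.1.2, f p.1.2 p.1.1)
  | Sum.inr p => ((p.1, mB p.2), (p.1, wB p.2))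
def rho (s : XX n → XX n → XX n) : II n → Option (XX n)
  | Sum.inl p => some (s p.1.1 p.1.2)
  | Sum.inr p => (rj p.2).map fun j => (p.1, j)

def gm (e : XX n ≃ Fin (3 * n)) (f : XX n → XX n → XX n) (i : II n) : Game (3 * n) :=
  s((e (tA f i).1, e (tA f i).2), (e (tB f i).1, e (tB f i).2))

variable (e : XX n ≃ Fin (3 * n)) (f : XX n → XX n → XX n) (i : II n)

theorem gm_cases (a b : Fin (3 * n) × Fin (3 * n)) : gm e f i = s(a, b) ↔
    (a = (e (tA f i).1, e (tA f i).2) ∧ b = (e (tB f i).1, e (tB f i).2)) ∨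
    (b = (e (tA f i).1, e (tA f i).2) ∧ a = (e (tB f i).1, e (tB f i).2)) := by
  unfold gm
  rw [Sym2.eq_iff]
  constructor
  · rintro (⟨rfl, rfl⟩ | ⟨rfl, rfl⟩) <;> simp
  · rintro (⟨rfl, rfl⟩ | ⟨rfl, rfl⟩) <;> simp

theorem gm_partners (u v : XX n) : Game.partners (e u) (e v) (gm e f i) ↔
    ((tA f i).1 = u ∧ (tA f i).2 = v) ∨ ((tB f i).1 = u ∧ (tB f i).2 = v) := by
  unfold Game.partners gm
  rw [Sym2.mem_iff]
  simp only [Prod.mk.injEq, e.injective.eq_iff]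
  tauto

theorem gm_gen (P : Fin (3 * n) × Fin (3 * n) → Fin (3 * n) × Fin (3 * n) → Prop) :
    (∃ a b : Fin (3 * n) × Fin (3 * n), gm e f i = s(a, b) ∧ P a b) ↔
    P (e (tA f i).1, e (tA f i).2) (e (tB f i).1, e (tB f i).2) ∨
    P (e (tB f i).1, e (tB f i).2) (e (tA f i).1, e (tA f i).2) := by
  constructor
  · rintro ⟨a, b, h, hP⟩
    rcases (gm_cases e f i a b).1 h with ⟨rfl, rfl⟩ | ⟨rfl, rfl⟩
    · exact Or.inl hP
    · exact Or.inr hP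
  · rintro (h | h)
    · exact ⟨_, _, (gm_cases e f i _ _).2 (Or.inl ⟨rfl, rfl⟩), h⟩
    · exact ⟨_, _, (gm_cases e f i _ _).2 (Or.inr ⟨rfl, rfl⟩), h⟩

theorem gm_mw (u v : XX n) : Game.opposesMW (e u) (e v) (gm e f i) ↔
    ((tA f i).1 = u ∧ (tB f i).2 = v) ∨ ((tB f i).1 = u ∧ (tA f i).2 = v) := by
  refine (gm_gen e f i fun a b => a.1 = e u ∧ b.2 = e v).trans ?_
  simp only [e.injective.eq_iff]

theorem gm_mm (u v : XX n) : Game.opposesMM (e u) (e v) (gm e f i) ↔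
    ((tA f i).1 = u ∧ (tB f i).1 = v) ∨ ((tB f i).1 = u ∧ (tA f i).1 = v) := by
  refine (gm_gen e f i fun a b => a.1 = e u ∧ b.1 = e v).trans ?_
  simp only [e.injective.eq_iff]

theorem gm_ww (u v : XX n) : Game.opposesWW (e u) (e v) (gm e f i) ↔
    ((tA f i).2 = u ∧ (tB f i).2 = v) ∨ ((tB f i).2 = u ∧ (tA f i).2 = v) := by
  refine (gm_gen e f i fun a b => a.2 = e u ∧ b.2 = e v).trans ?_
  simp only [e.injective.eq_iff]

theorem gm_man (u : XX n) : Game.manIn (e u) (gm e f i) ↔ (tA f i).1 = u ∨ (tB f i).1 = u := by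
  refine (gm_gen e f i fun a b => a.1 = e u).trans ?_
  simp only [e.injective.eq_iff]

theorem gm_woman (u : XX n) : Game.womanIn (e u) (gm e f i) ↔ (tA f i).2 = u ∨ (tB f i).2 = u := by
  refine (gm_gen e f i fun a b => a.2 = e u).trans ?_
  simp only [e.injective.eq_iff]

/-- the games of index set `S` -/
def gms (S : Finset (II n)) : Multiset (Game (3 * n)) := S.val.map (gm e f)

theorem gms_count (S : Finset (II n)) (P : Game (3 * n) → Prop) :
    (gms e f S).countP P = (S.filter fun i => P (gm e f i)).card := by
  unfold gms
  rw [Multiset.countP_map]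
  rfl

variable {e f i} {s : XX n → XX n → XX n}

abbrev RX (n : ℕ) : XX n → XX n → Prop := fun x y => x.1 ≠ y.1

theorem c_partners (H : IsFr (RX n) f s) (u v : XX n) :
    (gms e f Finset.univ).countP (Game.partners (e u) (e v)) =
      if u.1 ≠ v.1 then 1 else if u.2 = 0 ∧ v.2 = 0 then 0 else 1 := by
  rw [gms_count, cnt_all (FM f s 0) (H.maps 0) (H.inj 0) u v _
    (fun j => (mA j = u.2 ∧ wA j = v.2) ∨ (mB j = u.2 ∧ wB j = v.2))]
  · congr 1
    generalize u.2 = a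
    generalize v.2 = b
    revert a b
    decide
  · intro p
    rw [gm_partners]
    simp [tA, tB, FM]
  · intro h j
    rw [gm_partners]
    simp only [tA, tB, Prod.ext_iff]
    tauto

theorem c_mw (H : IsFr (RX n) f s) (u v : XX n) :
    (gms e f Finset.univ).countP (Game.opposesMW (e u) (e v)) =
      if u.1 ≠ v.1 then 1 else if u.2 = 0 ∧ v.2 = 0 then 0 else 1 := by
  rw [gms_count, cnt_all (FM f s 1) (H.maps 1) (H.inj 1) u v _
    (fun j => (mA j = u.2 ∧ wB j = v.2) ∨ (mB j = u.2 ∧ wA j = v.2))]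
  · congr 1
    generalize u.2 = a
    generalize v.2 = b
    revert a b
    decide
  · intro p
    rw [gm_mw]
    simp [tA, tB, FM]
  · intro h j
    rw [gm_mw]
    simp only [tA, tB, Prod.ext_iff]
    tauto

def cs (a b : Fin 3) : ℕ := if a = b then 0 else if a = 0 ∨ b = 0 then 1 else 2

theorem c_mm (u v : XX n) :
    (gms e f Finset.univ).countP (Game.opposesMM (e u) (e v)) =
      if u.1 ≠ v.1 then 1 else cs u.2 v.2 := by
  rw [gms_count, cnt_all (fun x y => (x, y)) (fun x y h => h) (fun x y x' y' _ _ h => by simpa using h) u v _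
    (fun j => (mA j = u.2 ∧ mB j = v.2) ∨ (mB j = u.2 ∧ mA j = v.2))]
  · congr 1
    generalize u.2 = a
    generalize v.2 = b
    revert a b
    decide
  · intro p
    rw [gm_mm]
    simp only [tA, tB, Prod.mk.injEq]
  · intro h j
    rw [gm_mm]
    simp only [tA, tB, Prod.ext_iff]
    tauto

theorem c_ww (H : IsFr (RX n) f s) (u v : XX n) :
    (gms e f Finset.univ).countP (Game.opposesWW (e u) (e v)) =
      if u.1 ≠ v.1 then 1 else cs u.2 v.2 := by
  rw [gms_count, cnt_all (FM f s 2) (H.maps 2) (H.inj 2) u v _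
    (fun j => (wA j = u.2 ∧ wB j = v.2) ∨ (wB j = u.2 ∧ wA j = v.2))]
  · congr 1
    generalize u.2 = a
    generalize v.2 = b
    revert a b
    decide
  · intro p
    rw [gm_ww]
    simp [tA, tB, FM]
  · intro h j
    rw [gm_ww]
    simp only [tA, tB, Prod.ext_iff]
    tauto

def bm : Fin 3 → Fin 3 := ![2, 1, 0]
def bw : Fin 3 → Fin 3 := ![0, 0, 1]

def rnd (s : XX n → XX n → XX n) (o : Option (XX n)) : Finset (II n) := Finset.univ.filter fun i => rho s i = o

theorem c_man (H : IsFr (RX n) f s) (u r : XX n) :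
    (gms e f (rnd s (some r))).countP (Game.manIn (e u)) = if u = (r.1, bm r.2) then 0 else 1 := by
  rw [gms_count, rnd, Finset.filter_filter, cnt_all (FM f s 3) (H.maps 3) (H.inj 3) u r _
    (fun j => rj j = some r.2 ∧ (mA j = u.2 ∨ mB j = u.2))]
  · by_cases h : u.1 = r.1
    · rw [if_neg (not_not.2 h)]
      simp only [Prod.ext_iff, h, true_and]
      generalize u.2 = a
      generalize r.2 = b
      revert a b
      decide
    · rw [if_pos h, if_neg]
      intro h'
      exact h (by rw [h'])
  · intro p
    rw [gm_man]
    have := H.ss _ _ (ne_of_lt p.2)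
    simp [tA, tB, FM, rho, this]
    tauto
  · intro h j
    rw [gm_man]
    simp only [tA, tB, Prod.ext_iff, rho, Option.map_eq_some_iff]
    constructor
    · rintro ⟨⟨a, h1, h2, h3⟩, h4⟩
      subst h3
      tauto
    · rintro ⟨h1, h2, h3, h4⟩
      exact ⟨⟨_, h3, h2, rfl⟩, by tauto⟩

theorem c_woman (H : IsFr (RX n) f s) (u r : XX n) :
    (gms e f (rnd s (some r))).countP (Game.womanIn (e u)) = if u = (r.1, bw r.2) then 0 else 1 := by
  rw [gms_count, rnd, Finset.filter_filter, cnt_all (FM f s 4) (H.maps 4) (H.inj 4) u r _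
    (fun j => rj j = some r.2 ∧ (wA j = u.2 ∨ wB j = u.2))]
  · by_cases h : u.1 = r.1
    · rw [if_neg (not_not.2 h)]
      simp only [Prod.ext_iff, h, true_and]
      generalize u.2 = a
      generalize r.2 = b
      revert a b
      decide
    · rw [if_pos h, if_neg]
      intro h'
      exact h (by rw [h'])
  · intro p
    rw [gm_woman]
    have := H.ss _ _ (ne_of_lt p.2)
    simp [tA, tB, FM, rho, this]
    tauto
  · intro h j
    rw [gm_woman]
    simp only [tA, tB, Prod.ext_iff, rho, Option.map_eq_some_iff]
    constructor
    · rintro ⟨⟨a, h1, h2, h3⟩, h4⟩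
      subst h3
      tauto
    · rintro ⟨h1, h2, h3, h4⟩
      exact ⟨⟨_, h3, h2, rfl⟩, by tauto⟩

def hh (h : Fin n) : II n := Sum.inr (h, 3)
theorem hh_inj : Function.Injective (hh (n := n)) := by
  intro a b h
  have h := Sum.inr_injective h
  exact congrArg Prod.fst h

theorem rnd_none (s : XX n → XX n → XX n) :
    rnd s none = Finset.univ.image hh := by
  ext i
  rcases i with p | ⟨h, j⟩
  · rw [rnd, Finset.mem_filter, Finset.mem_image]
    simp [rho, hh]
  · rw [rnd, Finset.mem_filter, Finset.mem_image]
    have : ∀ j : Fin 4, rj j = none ↔ 3 = j := by decide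
    constructor
    · rintro ⟨-, h1⟩
      refine ⟨h, Finset.mem_univ _, ?_⟩
      rw [hh, (this j).1 (Option.map_eq_none_iff.1 h1)]
    · rintro ⟨a, -, h1⟩
      refine ⟨Finset.mem_univ _, Option.map_eq_none_iff.2 ((this j).2 ?_)⟩
      exact congrArg Prod.snd (Sum.inr_injective h1)

theorem c_man0 (u : XX n) :
    (gms e f (rnd s none)).countP (Game.manIn (e u)) = if u.2 = 0 then 0 else 1 := by
  rw [gms_count, rnd_none, Finset.filter_image, Finset.card_image_of_injective _ hh_inj]
  simp only [gm_man, hh, tA, tB]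
  split_ifs with h
  · rw [Finset.card_eq_zero, Finset.filter_eq_empty_iff]
    intro x _
    simp [Prod.ext_iff, h, mA, mB]
  · rw [Finset.card_eq_one]
    refine ⟨u.1, ?_⟩
    ext x
    have : ∀ a : Fin 3, a ≠ 0 → (mA 3 = a ∨ mB 3 = a) := by decide
    have := this _ h
    simp only [Finset.mem_filter, Finset.mem_univ, true_and, Finset.mem_singleton, Prod.ext_iff]
    tauto

theorem c_woman0 (u : XX n) :
    (gms e f (rnd s none)).countP (Game.womanIn (e u)) ≤ 1 := by
  rw [gms_count, rnd_none, Finset.filter_image, Finset.card_image_of_injective _ hh_inj, Finset.card_le_one]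
  simp only [gm_woman, hh, tA, tB]
  intro a ha b hb
  simp only [Finset.mem_filter, Finset.mem_univ, true_and, Prod.ext_iff] at ha hb
  have h1 : a = u.1 := by tauto
  have h2 : b = u.1 := by tauto
  rw [h1, h2]

theorem card_round (H : IsFr (RX n) f s) (e : XX n ≃ Fin (3 * n)) (r : XX n) : 2 * (rnd s (some r)).card + 1 = 3 * n := by
  have h1 : ∀ u : XX n, ((rnd s (some r)).filter fun i => (tA f i).1 = u ∨ (tB f i).1 = u).card =
      if u = (r.1, bm r.2) then 0 else 1 := by
    intro u
    rw [← c_man (e := e) H u r, gms_count]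
    simp only [gm_man]
  have h2 : ∑ u : XX n, ((rnd s (some r)).filter fun i => (tA f i).1 = u ∨ (tB f i).1 = u).card =
      2 * (rnd s (some r)).card := by
    simp only [Finset.card_filter]
    rw [Finset.sum_comm, mul_comm, ← smul_eq_mul, ← Finset.sum_const]
    apply Finset.sum_congr rfl
    intro i _
    rw [← Finset.card_filter]
    have hne : (tA f i).1 ≠ (tB f i).1 := by
      rcases i with p | ⟨h, j⟩
      · intro h
        have h : p.1.1 = p.1.2 := h
        have := p.2
        rw [h] at this
        exact lt_irrefl _ this
      · intro h
        have h := congrArg Prod.snd h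
        simp only [tA, tB] at h
        have key : ∀ j, mA j ≠ mB j := by decide
        exact key j h
    rw [← Finset.card_pair hne]
    congr 1
    ext u
    simp [eq_comm]
  rw [← h2]
  simp only [h1]
  have h3 : ∑ u : XX n, (if u = (r.1, bm r.2) then 0 else 1) + ∑ u : XX n, (if u = (r.1, bm r.2) then 1 else 0) = 3 * n := by
    rw [← Finset.sum_add_distrib]
    have : ∀ u : XX n, ((if u = (r.1, bm r.2) then 0 else 1) + if u = (r.1, bm r.2) then 1 else 0) = 1 := by
      intro u; split_ifs <;> rfl
    simp only [this]
    simp [mul_comm]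
  rw [← h3]
  congr 1
  simp

end fin2


section fin3
variable {n : ℕ} (e : XX n ≃ Fin (3 * n)) (f s : XX n → XX n → XX n)

theorem gms_union : ((Finset.univ : Finset (XX n)).val.map fun r => gms e f (rnd s (some r))).sum +
    gms e f (rnd s none) = gms e f Finset.univ := by
  have h : ∀ S : Finset (II n), gms e f S = ∑ i ∈ S, {gm e f i} := by
    intro S
    have := Multiset.sum_map_singleton (gms e f S)
    rw [← this]
    unfold gms
    rw [Multiset.map_map]
    rfl
  have h2 : ((Finset.univ : Finset (XX n)).val.map fun r => gms e f (rnd s (some r))).sum =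
    ∑ r : XX n, gms e f (rnd s (some r)) := rfl
  rw [h2]
  simp only [h]
  rw [← Finset.sum_fiberwise Finset.univ (rho s) (fun i => ({gm e f i} : Multiset (Game (3 * n)))),
    Fintype.sum_option, add_comm]
  rfl

def sp : Finset (Fin (3 * n) × Fin (3 * n)) := Finset.univ.image fun h : Fin n => (e (h, 0), e (h, 0))

theorem mem_sp (u v : XX n) : (e u, e v) ∈ sp e ↔ u.1 = v.1 ∧ u.2 = 0 ∧ v.2 = 0 := by
  simp only [sp, Finset.mem_image, Finset.mem_univ, true_and, Prod.mk.injEq, e.injective.eq_iff, Prod.ext_iff]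
  constructor
  · rintro ⟨a, ⟨h1, h2⟩, h3, h4⟩
    exact ⟨h1.symm.trans h3, h2.symm, h4.symm⟩
  · rintro ⟨h1, h2, h3⟩
    exact ⟨u.1, ⟨rfl, h2.symm⟩, h1, h3.symm⟩

theorem mem_sp1 (u : XX n) : e u ∈ (sp e).image Prod.fst ↔ u.2 = 0 := by
  simp only [sp, Finset.mem_image, Finset.mem_univ, true_and]
  constructor
  · rintro ⟨_, ⟨a, rfl⟩, h2⟩
    exact (congrArg Prod.snd (e.injective h2)).symm
  · intro h
    refine ⟨_, ⟨u.1, rfl⟩, ?_⟩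
    rw [← h]

theorem mem_sp2 (u : XX n) : e u ∈ (sp e).image Prod.snd ↔ u.2 = 0 := by
  simp only [sp, Finset.mem_image, Finset.mem_univ, true_and]
  constructor
  · rintro ⟨_, ⟨a, rfl⟩, h2⟩
    exact (congrArg Prod.snd (e.injective h2)).symm
  · intro h
    refine ⟨_, ⟨u.1, rfl⟩, ?_⟩
    rw [← h]

theorem opp_once (u v : XX n) (h : u.2 = 0) (hv : v ≠ u) :
    (if u.1 ≠ v.1 then 1 else cs u.2 v.2) = 1 := by
  split_ifs with h1
  · rfl
  · rw [h]
    have : v.2 ≠ 0 := fun h' => hv (Prod.ext (not_not.1 h1).symm (h'.trans h.symm))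
    revert this
    generalize v.2 = b
    revert b
    decide

theorem opp_twice (u : XX n) (h : u.2 ≠ 0) :
    ∃ v : XX n, v ≠ u ∧ v.2 ≠ 0 ∧ (if u.1 ≠ v.1 then 1 else cs u.2 v.2) = 2 ∧
      ∀ w : XX n, w ≠ u → w ≠ v → (if u.1 ≠ w.1 then 1 else cs u.2 w.2) = 1 := by
  have key : ∀ a : Fin 3, a ≠ 0 → ∃ b : Fin 3, b ≠ a ∧ b ≠ 0 ∧ cs a b = 2 ∧ ∀ c, c ≠ a → c ≠ b → cs a c = 1 := by
    decide
  obtain ⟨b, h1, h2, h3, h4⟩ := key _ h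
  refine ⟨(u.1, b), fun h => h1 (congrArg Prod.snd h), h2, by simpa using h3, ?_⟩
  intro w hw hw'
  split_ifs with h5
  · rfl
  · have h5 := (not_not.1 h5).symm
    exact h4 _ (fun h => hw (Prod.ext h5 h)) (fun h => hw' (Prod.ext h5 h))

theorem gm_valid {f s : XX n → XX n → XX n} (H : IsFr (RX n) f s) (i : II n) : (gm e f i).valid := by
  refine ⟨_, _, rfl, ?_⟩
  simp only [ne_eq, e.injective.eq_iff]
  rcases i with p | ⟨h, j⟩
  · constructor
    · intro h
      exact ne_of_lt p.2 (congrArg Prod.fst h)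
    · intro h
      exact H.maps 2 _ _ (ne_of_lt p.2) (congrArg Prod.fst h)
  · constructor
    · intro h
      have h := congrArg Prod.snd h
      simp only [tA, tB] at h
      have key : ∀ j, mA j ≠ mB j := by decide
      exact key j h
    · intro h
      have h := congrArg Prod.snd h
      simp only [tA, tB] at h
      have key : ∀ j, wA j ≠ wB j := by decide
      exact key j h

def TT {f s : XX n → XX n → XX n} (H : IsFr (RX n) f s) : CMDRR (3 * n) n where
  spouses := sp e
  spouses_card := by
    rw [sp, Finset.card_image_of_injective _ (fun a b h => by simpa using h)]
    simp
  spouses_inj1 := by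
    intro p hp q hq h
    simp only [sp, Finset.mem_image, Finset.mem_univ, true_and] at hp hq
    obtain ⟨a, rfl⟩ := hp
    obtain ⟨b, rfl⟩ := hq
    exact Prod.ext h h
  spouses_inj2 := by
    intro p hp q hq h
    simp only [sp, Finset.mem_image, Finset.mem_univ, true_and] at hp hq
    obtain ⟨a, rfl⟩ := hp
    obtain ⟨b, rfl⟩ := hq
    exact Prod.ext h h
  games := gms e f Finset.univ
  valid := by
    intro g hg
    obtain ⟨i, -, rfl⟩ := Multiset.mem_map.1 hg
    exact gm_valid e H i
  no_spouse_game := by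
    rintro g hg p hp ⟨h1, h2⟩
    simp only [sp, Finset.mem_image, Finset.mem_univ, true_and] at hp
    obtain ⟨a, rfl⟩ := hp
    have k1 := c_partners (e := e) H (a, 0) (a, 0)
    have k2 := c_mw (e := e) H (a, 0) (a, 0)
    simp only [ne_eq, not_true_eq_false, if_false, and_self, if_true, Multiset.countP_eq_zero] at k1 k2
    have k1 := k1 g hg
    have k2 := k2 g hg
    obtain ⟨i, -, rfl⟩ := Multiset.mem_map.1 hg
    rw [gm_partners] at k1
    rw [gm_mw] at k2
    rw [gm_man] at h1
    rw [gm_woman] at h2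
    tauto
  partners_once := by
    intro m w h
    obtain ⟨u, rfl⟩ := e.surjective m
    obtain ⟨v, rfl⟩ := e.surjective w
    rw [mem_sp] at h
    rw [c_partners H]
    split_ifs with h1 h2
    · rfl
    · exact absurd ⟨not_not.1 h1, h2⟩ h
    · rfl
  opposesMW_once := by
    intro m w h
    obtain ⟨u, rfl⟩ := e.surjective m
    obtain ⟨v, rfl⟩ := e.surjective w
    rw [mem_sp] at h
    rw [c_mw H]
    split_ifs with h1 h2
    · rfl
    · exact absurd ⟨not_not.1 h1, h2⟩ h
    · rfl
  spousedM_opposes := by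
    intro m h m' hm
    obtain ⟨u, rfl⟩ := e.surjective m
    obtain ⟨v, rfl⟩ := e.surjective m'
    rw [mem_sp1] at h
    rw [c_mm]
    exact opp_once u v h (fun h => hm (congrArg e h))
  spousedW_opposes := by
    intro m h m' hm
    obtain ⟨u, rfl⟩ := e.surjective m
    obtain ⟨v, rfl⟩ := e.surjective m'
    rw [mem_sp2] at h
    rw [c_ww H]
    exact opp_once u v h (fun h => hm (congrArg e h))
  unspousedM_opposes := by
    intro m h
    obtain ⟨u, rfl⟩ := e.surjective m
    rw [mem_sp1] at h
    obtain ⟨v, h1, h2, h3, h4⟩ := opp_twice u h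
    refine ⟨e v, fun h => h1 (e.injective h), by rwa [mem_sp1], by rw [c_mm]; exact h3, ?_⟩
    intro w hw hw'
    obtain ⟨w, rfl⟩ := e.surjective w
    rw [c_mm]
    exact h4 w (fun h => hw (congrArg e h)) (fun h => hw' (congrArg e h))
  unspousedW_opposes := by
    intro m h
    obtain ⟨u, rfl⟩ := e.surjective m
    rw [mem_sp2] at h
    obtain ⟨v, h1, h2, h3, h4⟩ := opp_twice u h
    refine ⟨e v, fun h => h1 (e.injective h), by rwa [mem_sp2], by rw [c_ww H]; exact h3, ?_⟩
    intro w hw hw'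
    obtain ⟨w, rfl⟩ := e.surjective w
    rw [c_ww H]
    exact h4 w (fun h => hw (congrArg e h)) (fun h => hw' (congrArg e h))

end fin3


/-- For every odd `n ≥ 5` there is a fully resolvable CMDRR(3n, n): `3n` full
rounds of `(3n - 1)/2` games each (each giving byes to exactly one man and one
woman), plus one short round of `n` games. -/
theorem cmdrr_3n_n_fully_resolvable (n : ℕ) (hn : 5 ≤ n) (hodd : Odd n) :
    ∃ T : CMDRR (3 * n) n,
      ∃ fulls : Multiset (Multiset (Game (3 * n))), ∃ short : Multiset (Game (3 * n)),
        fulls.sum + short = T.games ∧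
        Multiset.card fulls = 3 * n ∧
        (∀ r ∈ fulls, FullRound r ∧ Multiset.card r = (3 * n - 1) / 2) ∧
        IsRound short ∧ ¬ FullRound short ∧ Multiset.card short = n := by
  obtain ⟨N, rfl⟩ := hodd
  obtain ⟨f, s, H⟩ := good_all N (by omega)
  have H : IsFr (RX (2 * N + 1)) f s := H
  have hne : ¬ Even (3 * (2 * N + 1)) := by
    rw [Nat.even_iff]
    omega
  generalize 2 * N + 1 = n at *
  have e : XX n ≃ Fin (3 * n) := Fintype.equivFinOfCardEq (by simp [mul_comm])
  refine ⟨TT e H, Finset.univ.val.map fun r => gms e f (rnd s (some r)), gms e f (rnd s none),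
    gms_union e f s, ?_, ?_, ?_, ?_, ?_⟩
  · rw [Multiset.card_map, Finset.card_val]
    simp [mul_comm]
  · intro r hr
    obtain ⟨r, -, rfl⟩ := Multiset.mem_map.1 hr
    refine ⟨⟨⟨?_, ?_⟩, Or.inr ⟨hne, ⟨e (r.1, bm r.2), ?_, ?_⟩, ⟨e (r.1, bw r.2), ?_, ?_⟩⟩⟩, ?_⟩
    · intro m
      obtain ⟨u, rfl⟩ := e.surjective m
      rw [c_man H]
      split_ifs <;> simp
    · intro m
      obtain ⟨u, rfl⟩ := e.surjective m
      rw [c_woman H]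
      split_ifs <;> simp
    · beta_reduce
      rw [c_man H, if_pos rfl]
    · intro m hm
      obtain ⟨u, rfl⟩ := e.surjective m
      rw [c_man H] at hm
      split_ifs at hm with h
      rw [h]
    · beta_reduce
      rw [c_woman H, if_pos rfl]
    · intro m hm
      obtain ⟨u, rfl⟩ := e.surjective m
      rw [c_woman H] at hm
      split_ifs at hm with h
      rw [h]
    · rw [gms, Multiset.card_map, Finset.card_val]
      have := card_round H e r
      omega
  · refine ⟨?_, ?_⟩
    · intro m
      obtain ⟨u, rfl⟩ := e.surjective m
      rw [c_man0]
      split_ifs <;> simp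
    · intro m
      obtain ⟨u, rfl⟩ := e.surjective m
      exact c_woman0 u
  · rintro ⟨-, ⟨h, -⟩ | ⟨-, h, -⟩⟩
    · exact hne h
    · have h0 := h.unique (y₁ := e (⟨0, by omega⟩, 0)) (y₂ := e (⟨1, by omega⟩, 0))
        (by rw [c_man0]; rfl) (by rw [c_man0]; rfl)
      have := congrArg Prod.fst (e.injective h0)
      simp at this
  · rw [gms, Multiset.card_map, Finset.card_val, rnd_none, Finset.card_image_of_injective _ hh_inj]
    simp
end

section
/- There exists a CMDRR(16,6) whose 125 games can be partitioned into 25 rounds of 5 games each, such that each player plays in at most one game per round. -/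
open scoped Classical

namespace CM166

abbrev PP := (Fin 16 × Fin 16) × (Fin 16 × Fin 16)

/-- The order five automorphism, fixing player 15 and rotating three blocks of size five. -/
def sh (t : ℕ) (p : Fin 16) : Fin 16 :=
  bif p.val == 15 then p else Fin.ofNat 16 (p.val / 5 * 5 + (p.val + t) % 5)

def shG (t : ℕ) (g : PP) : PP := ((sh t g.1.1, sh t g.1.2), (sh t g.2.1, sh t g.2.2))

def base : List (List PP) := [
  [((0, 1), (15, 10)), ((1, 9), (10, 14)), ((3, 13), (11, 15)), ((7, 6), (5, 11)), ((13, 2), (14, 12))],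
  [((0, 14), (7, 11)), ((1, 12), (12, 13)), ((10, 6), (15, 4)), ((4, 15), (9, 7)), ((3, 0), (6, 1))],
  [((0, 13), (10, 2)), ((7, 10), (14, 6)), ((2, 8), (6, 11)), ((8, 15), (11, 1)), ((5, 12), (15, 5))],
  [((13, 1), (10, 5)), ((0, 3), (4, 9)), ((7, 4), (12, 12)), ((2, 14), (8, 8)), ((6, 7), (11, 2))],
  [((5, 1), (11, 13)), ((7, 0), (8, 2)), ((6, 8), (10, 9)), ((4, 3), (2, 6)), ((0, 7), (12, 5))]]

def rds : List (List PP) :=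
  [0, 1, 2, 3, 4].flatMap fun t => base.map fun r => r.map (shG t)

def all : List PP := rds.flatten

def mk (p : PP) : Game 16 := s(p.1, p.2)

def toM (L : List PP) : Multiset (Game 16) := ((L.map mk : List (Game 16)) : Multiset (Game 16))

def bP (m w : Fin 16) (p : PP) : Bool :=
  (p.1.1.val == m.val && p.1.2.val == w.val) || (p.2.1.val == m.val && p.2.2.val == w.val)
def bO (m w : Fin 16) (p : PP) : Bool :=
  (p.1.1.val == m.val && p.2.2.val == w.val) || (p.2.1.val == m.val && p.1.2.val == w.val)
def bM (m w : Fin 16) (p : PP) : Bool :=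
  (p.1.1.val == m.val && p.2.1.val == w.val) || (p.2.1.val == m.val && p.1.1.val == w.val)
def bW (m w : Fin 16) (p : PP) : Bool :=
  (p.1.2.val == m.val && p.2.2.val == w.val) || (p.2.2.val == m.val && p.1.2.val == w.val)
def bMi (m : Fin 16) (p : PP) : Bool := p.1.1.val == m.val || p.2.1.val == m.val
def bWi (m : Fin 16) (p : PP) : Bool := p.1.2.val == m.val || p.2.2.val == m.val

theorem cnt (L : List PP) (P : Game 16 → Prop) [DecidablePred P] (B : PP → Bool)
    (h : ∀ p, P (mk p) ↔ B p = true) : (toM L).countP P = L.countP B := by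
  unfold toM
  rw [Multiset.coe_countP, List.countP_map]
  apply List.countP_congr
  intro p _
  simp [h]

theorem ex_iff (p : PP) (Q : Fin 16 × Fin 16 → Fin 16 × Fin 16 → Prop) :
    (∃ a b, mk p = s(a, b) ∧ Q a b) ↔ Q p.1 p.2 ∨ Q p.2 p.1 := by
  unfold mk
  constructor
  · rintro ⟨a, b, h, q⟩
    rcases Sym2.eq_iff.1 h with ⟨h1, h2⟩ | ⟨h1, h2⟩
    · left; rw [h1, h2]; exact q
    · right; rw [h1, h2]; exact q
  · rintro (h | h)
    · exact ⟨_, _, rfl, h⟩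
    · exact ⟨_, _, Sym2.eq_swap, h⟩

theorem hP (m w : Fin 16) (p : PP) : Game.partners m w (mk p) ↔ bP m w p = true := by
  simp only [Game.partners, mk, Sym2.mem_iff, bP, Prod.ext_iff, Fin.ext_iff, Bool.or_eq_true,
    Bool.and_eq_true, beq_iff_eq]
  tauto
theorem hO (m w : Fin 16) (p : PP) : Game.opposesMW m w (mk p) ↔ bO m w p = true := by
  unfold Game.opposesMW
  rw [ex_iff]
  simp [bO, Fin.ext_iff]
theorem hM (m w : Fin 16) (p : PP) : Game.opposesMM m w (mk p) ↔ bM m w p = true := by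
  unfold Game.opposesMM
  rw [ex_iff]
  simp [bM, Fin.ext_iff]
theorem hW (m w : Fin 16) (p : PP) : Game.opposesWW m w (mk p) ↔ bW m w p = true := by
  unfold Game.opposesWW
  rw [ex_iff]
  simp [bW, Fin.ext_iff]
theorem hMi (m : Fin 16) (p : PP) : Game.manIn m (mk p) ↔ bMi m p = true := by
  unfold Game.manIn
  rw [ex_iff p fun a _ => a.1 = m]
  simp [bMi, Fin.ext_iff]
theorem hWi (m : Fin 16) (p : PP) : Game.womanIn m (mk p) ↔ bWi m p = true := by
  unfold Game.womanIn
  rw [ex_iff p fun a _ => a.2 = m]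
  simp [bWi, Fin.ext_iff]

/-- spoused players -/
def sb (m : Fin 16) : Bool := Nat.blt m.val 5 || m.val == 15

/-- opponent met twice -/
def dbl (m : Fin 16) : Fin 16 := bif Nat.blt m.val 10 then Fin.ofNat 16 (m.val + 5) else
  Fin.ofNat 16 (m.val - 5)

def S : Finset (Fin 16 × Fin 16) :=
  Finset.univ.filter fun p => (sb p.1 && p.1.val == p.2.val) = true

theorem mem_S (a b : Fin 16) : (a, b) ∈ S ↔ sb a = true ∧ a = b := by
  simp [S, Fin.ext_iff]

theorem mem1 (m : Fin 16) : m ∈ S.image Prod.fst ↔ sb m = true := by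
  simp [S, ← Fin.ext_iff]
theorem mem2 (m : Fin 16) : m ∈ S.image Prod.snd ↔ sb m = true := by
  simp [S, ← Fin.ext_iff]

theorem cP : ∀ m w : Fin 16, all.countP (bP m w) = bif sb m && m.val == w.val then 0 else 1 := by
  decide +kernel
theorem cO : ∀ m w : Fin 16, all.countP (bO m w) = bif sb m && m.val == w.val then 0 else 1 := by
  decide +kernel
theorem cM : ∀ m w : Fin 16, all.countP (bM m w) =
    bif m.val == w.val then 0 else bif !(sb m) && (dbl m).val == w.val then 2 else 1 := by
  decide +kernel
theorem cW : ∀ m w : Fin 16, all.countP (bW m w) =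
    bif m.val == w.val then 0 else bif !(sb m) && (dbl m).val == w.val then 2 else 1 := by
  decide +kernel
theorem cR1 : (rds.all fun r => (List.finRange 16).all fun m => Nat.ble (r.countP (bMi m)) 1) = true := by
  decide +kernel
theorem cR2 : (rds.all fun r => (List.finRange 16).all fun m => Nat.ble (r.countP (bWi m)) 1) = true := by
  decide +kernel
theorem cR3 : (rds.all fun r => r.length == 5) = true := by
  decide +kernel
theorem cV : (all.all fun p => p.1.1.val != p.2.1.val && p.1.2.val != p.2.2.val) = true := by
  decide +kernel
theorem cS : (all.all fun p => (List.finRange 16).all fun m => !(sb m && bMi m p && bWi m p)) = true := by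
  decide +kernel
theorem cD : ∀ m : Fin 16, sb m = false → dbl m ≠ m ∧ sb (dbl m) = false := by
  decide +kernel

theorem mem_toM {L : List PP} {g : Game 16} (h : g ∈ toM L) : ∃ p ∈ L, mk p = g := by
  simpa [toM] using h

def T : CMDRR 16 6 where
  spouses := S
  spouses_card := by
    decide +kernel
  spouses_inj1 := by
    rintro ⟨a, b⟩ hp ⟨c, d⟩ hq h
    rw [mem_S] at hp hq
    simp only at h
    rw [← hp.2, ← hq.2, h]
  spouses_inj2 := by
    rintro ⟨a, b⟩ hp ⟨c, d⟩ hq h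
    rw [mem_S] at hp hq
    simp only at h
    rw [hp.2, hq.2, h]
  games := toM all
  valid := by
    intro g hg
    obtain ⟨p, hp, rfl⟩ := mem_toM hg
    have := List.all_eq_true.1 cV p hp
    simp only [Bool.and_eq_true, bne_iff_ne, ne_eq, ← Fin.ext_iff] at this
    exact ⟨p.1, p.2, rfl, this⟩
  no_spouse_game := by
    rintro g hg ⟨a, b⟩ hs
    obtain ⟨p, hp, rfl⟩ := mem_toM hg
    obtain ⟨h1, rfl⟩ := (mem_S _ _).1 hs
    have := List.all_eq_true.1 (List.all_eq_true.1 cS p hp) a (List.mem_finRange a)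
    rintro ⟨h2, h3⟩
    simp only at h2 h3
    rw [hMi] at h2
    rw [hWi] at h3
    simp [h1, h2, h3] at this
  partners_once := by
    intro m w h
    rw [cnt all _ _ (hP m w), cP]
    rw [mem_S] at h
    cases hm : sb m <;> simp_all [Bool.cond_eq_ite, Fin.ext_iff]
  opposesMW_once := by
    intro m w h
    rw [cnt all _ _ (hO m w), cO]
    rw [mem_S] at h
    cases hm : sb m <;> simp_all [Bool.cond_eq_ite, Fin.ext_iff]
  spousedM_opposes := by
    intro m hm w h
    rw [mem1] at hm
    rw [cnt all _ _ (hM m w), cM]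
    have : m.val ≠ w.val := fun e => h (Fin.ext e.symm)
    simp [Bool.cond_eq_ite, hm, this]
  spousedW_opposes := by
    intro m hm w h
    rw [mem2] at hm
    rw [cnt all _ _ (hW m w), cW]
    have : m.val ≠ w.val := fun e => h (Fin.ext e.symm)
    simp [Bool.cond_eq_ite, hm, this]
  unspousedM_opposes := by
    intro m hm
    rw [mem1, Bool.not_eq_true] at hm
    obtain ⟨h1, h2⟩ := cD m hm
    refine ⟨dbl m, h1, by rw [mem1, h2]; simp, ?_, ?_⟩
    · rw [cnt all _ _ (hM m _), cM]
      have : m.val ≠ (dbl m).val := fun e => h1 (Fin.ext e.symm)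
      simp [Bool.cond_eq_ite, hm, this]
    · intro w h3 h4
      rw [cnt all _ _ (hM m _), cM]
      have : m.val ≠ w.val := fun e => h3 (Fin.ext e.symm)
      have h5 : (dbl m).val ≠ w.val := fun e => h4 (Fin.ext e.symm)
      simp [Bool.cond_eq_ite, hm, this, h5]
  unspousedW_opposes := by
    intro m hm
    rw [mem2, Bool.not_eq_true] at hm
    obtain ⟨h1, h2⟩ := cD m hm
    refine ⟨dbl m, h1, by rw [mem2, h2]; simp, ?_, ?_⟩
    · rw [cnt all _ _ (hW m _), cW]
      have : m.val ≠ (dbl m).val := fun e => h1 (Fin.ext e.symm)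
      simp [Bool.cond_eq_ite, hm, this]
    · intro w h3 h4
      rw [cnt all _ _ (hW m _), cW]
      have : m.val ≠ w.val := fun e => h3 (Fin.ext e.symm)
      have h5 : (dbl m).val ≠ w.val := fun e => h4 (Fin.ext e.symm)
      simp [Bool.cond_eq_ite, hm, this, h5]

theorem sum_toM (R : List (List PP)) : (R.map toM).sum = toM R.flatten := by
  induction R with
  | nil => rfl
  | cons a R ih =>
    rw [List.map_cons, List.sum_cons, ih]
    simp [toM]

end CM166

/-- There is a CMDRR(16,6) whose 125 games split into 25 rounds of 5 games each. -/
theorem cmdrr_16_6_resolution :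
    ∃ T : CMDRR 16 6, ∃ rounds : Multiset (Multiset (Game 16)),
      rounds.sum = T.games ∧ Multiset.card rounds = 25 ∧
      ∀ r ∈ rounds, IsRound r ∧ Multiset.card r = 5 := by
  refine ⟨CM166.T, ((CM166.rds.map CM166.toM : List _) : Multiset _), ?_, ?_, ?_⟩
  · rw [Multiset.sum_coe, CM166.sum_toM]
    rfl
  · rw [Multiset.coe_card, List.length_map]
    decide +kernel
  · intro r hr
    rw [Multiset.mem_coe, List.mem_map] at hr
    obtain ⟨L, hL, rfl⟩ := hr
    refine ⟨⟨fun m => ?_, fun m => ?_⟩, ?_⟩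
    · rw [CM166.cnt L _ _ (CM166.hMi m)]
      exact Nat.le_of_ble_eq_true
        (List.all_eq_true.1 (List.all_eq_true.1 CM166.cR1 L hL) m (List.mem_finRange m))
    · rw [CM166.cnt L _ _ (CM166.hWi m)]
      exact Nat.le_of_ble_eq_true
        (List.all_eq_true.1 (List.all_eq_true.1 CM166.cR2 L hL) m (List.mem_finRange m))
    · have := List.all_eq_true.1 CM166.cR3 L hL
      simpa [CM166.toM] using this
end
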